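/- arXiv:1703.06673 — 3 statements merged into one kernel-verified Lean document; each statement's English description precedes it below -/
import Mathlib

section
/- For every ε > 0 there exists p₀ such that for every prime p ≥ p₀ there exist ω(p-1) integers x₁, ..., x_{ω(p-1)} with 1 ≤ x_i ≤ p^{1/(4√e)+ε} for each i, such that the images of x₁, ..., x_{ω(p-1)} in the unit group (ZMod p)ˣ generate (ZMod p)ˣ (i.e., the subgroup closure of their images is the whole group). -/
/-!
By Lagrange it suffices to find, for every prime `q ∣ p - 1`, a small `q`-th power nonresidue:
a proper subgroup of `(ZMod p)ˣ` has an index divisible by some such `q`, so it consists of `q`-th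
powers.

Suppose every prime `l ≤ p ^ (1 / (4√e) + ε)` is a `q`-th power residue. Products of seven distinct
primes up to `p ^ (1 / 7)` are then many roots of `X ^ ((p - 1) / q) - 1`, which forces `q ≤ p ^ β`
with `β` as small as we like. For a character `χ` of order `q` and `N = p ^ (1 / 4 + δ)` there are
two contradictory estimates of `∑_{n ≤ N} Re χ(n)`.
* Vinogradov: `χ(n) = 1` unless `n` has a prime factor `l > y`, where `y = N ^ κ` and
  `κ > 1 / √e`, and by Mertens there are at most about `N log (1 / κ) < N / 2` such `n`.
* Burgess: `χ(n)` is compared with `χ(n + a b) = χ(a) χ(n / a + b)` for primes `a` and short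
  intervals of `b`; the fractions `n / a` are distinct modulo `p`, so the `2r`-th moment of the
  sums of `χ` over short intervals shows that the sum is `o(N)`.

The moment bound needs square-root cancellation in `∑_x χ(h(x))` for completely split `h`. It
comes from Stepanov's method: an auxiliary polynomial vanishing to high order at the `x` with
`h(x) ^ ((p - 1) / q)` prescribed bounds the number of these `x`, with enough uniformity in `q`
because `q ≤ p ^ β`.
-/

namespace SmallGeneratingSet

section TwistedDerivative

open Polynomial

/-- The operator `k ↦ f k' + n f' k`. It describes the derivation `f · d/dX` on multiples of
`f ^ n`: `f · (k f ^ n)' = (f k' + n f' k) f ^ n`. For `n = 0` it is this derivation itself. -/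
noncomputable def twistedDerivative {R : Type*} [CommRing R] (f : R[X]) (n : ℕ) :
    R[X] →ₗ[R] R[X] :=
  LinearMap.mulLeft R f ∘ₗ derivative + LinearMap.mulLeft R (n * derivative f)

section CommRing

variable {R : Type*} [CommRing R]

lemma twistedDerivative_apply (f : R[X]) (n : ℕ) (k : R[X]) :
    twistedDerivative f n k = f * derivative k + n * derivative f * k := rfl

lemma twistedDerivative_zero_apply (f k : R[X]) :
    twistedDerivative f 0 k = f * derivative k := by
  simp [twistedDerivative_apply]

lemma degree_twistedDerivative_le (f : R[X]) (n : ℕ) (k : R[X]) :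
    (twistedDerivative f n k).degree ≤ k.degree + f.natDegree := by
  have hf : f.degree ≤ f.natDegree := degree_le_natDegree
  have hf' : ((n : R[X]) * derivative f).degree ≤ f.natDegree := by
    rw [← nsmul_eq_mul]
    exact (degree_smul_le n _).trans ((degree_derivative_le).trans hf)
  rw [twistedDerivative_apply, add_comm k.degree]
  refine (degree_add_le _ _).trans (max_le ?_ ?_)
  · exact (degree_mul_le _ _).trans (add_le_add hf degree_derivative_le)
  · exact (degree_mul_le _ _).trans (add_le_add hf' le_rfl)

lemma degree_twistedDerivative_pow_le (f : R[X]) (n l : ℕ) (k : R[X]) :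
    ((twistedDerivative f n ^ l) k).degree ≤ k.degree + (l * f.natDegree : ℕ) := by
  induction l with
  | zero => simp
  | succ l ih =>
    rw [pow_succ', Module.End.mul_apply]
    calc (twistedDerivative f n ((twistedDerivative f n ^ l) k)).degree
        ≤ ((twistedDerivative f n ^ l) k).degree + f.natDegree := degree_twistedDerivative_le ..
      _ ≤ k.degree + (l * f.natDegree : ℕ) + f.natDegree := by gcongr
      _ = k.degree + ((l + 1) * f.natDegree : ℕ) := by
        rw [add_assoc, ← Nat.cast_add, Nat.succ_mul]

lemma twistedDerivative_zero_mul_pow_mul_X_pow (p : ℕ) [CharP R p] (f k : R[X]) (n j : ℕ) :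
    twistedDerivative f 0 (k * f ^ n * X ^ (p * j)) =
      twistedDerivative f n k * f ^ n * X ^ (p * j) := by
  have hp : ((p * j : ℕ) : R) = 0 := by simp
  rw [twistedDerivative_zero_apply, twistedDerivative_apply, derivative_mul, derivative_mul,
    derivative_X_pow, hp, derivative_pow]
  cases n with
  | zero => simp [mul_assoc]
  | succ n => simp only [map_natCast, Nat.add_sub_cancel, map_zero]; ring

lemma twistedDerivative_zero_pow_sum (p : ℕ) [CharP R p] {ι : Type*} (s : Finset ι) (f : R[X])
    (n j : ι → ℕ) (k : ι → R[X]) (l : ℕ) :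
    (twistedDerivative f 0 ^ l) (∑ i ∈ s, k i * f ^ n i * X ^ (p * j i)) =
      ∑ i ∈ s, (twistedDerivative f (n i) ^ l) (k i) * f ^ n i * X ^ (p * j i) := by
  induction l with
  | zero => simp
  | succ l ih =>
    simp only [pow_succ', Module.End.mul_apply]
    rw [ih, map_sum]
    simp only [twistedDerivative_zero_mul_pow_mul_X_pow]

end CommRing

section Field

variable {F : Type*} [Field F]

lemma X_sub_C_pow_succ_dvd {R : F[X]} {a : F} {M : ℕ} (hM : M ≠ 0 → (M : F) ≠ 0)
    (hroot : R.IsRoot a) (hR : (X - C a) ^ M ∣ R) (hR' : (X - C a) ^ M ∣ derivative R) :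
    (X - C a) ^ (M + 1) ∣ R := by
  rcases M with _ | M
  · simpa using dvd_iff_isRoot.mpr hroot
  obtain ⟨S, rfl⟩ := hR
  have hder : derivative ((X - C a) ^ (M + 1) * S) =
      (X - C a) ^ M * (((M + 1 : ℕ) : F[X]) * S) + (X - C a) ^ (M + 1) * derivative S := by
    rw [derivative_mul, derivative_X_sub_C_pow, Nat.add_sub_cancel, map_natCast]
    ring
  rw [hder, dvd_add_left (dvd_mul_right _ _), pow_succ,
    mul_dvd_mul_iff_left (pow_ne_zero _ (X_sub_C_ne_zero a)), dvd_iff_isRoot, IsRoot, eval_mul,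
    eval_natCast] at hR'
  have hS : S.IsRoot a := (mul_eq_zero.mp hR').resolve_left (hM M.succ_ne_zero)
  rw [pow_succ _ (M + 1)]
  exact mul_dvd_mul_left _ (dvd_iff_isRoot.mpr hS)

lemma X_sub_C_pow_dvd_of_eval_twistedDerivative {f : F[X]} {a : F} (hf : f.eval a ≠ 0) {M : ℕ}
    (hM : ∀ n < M, n ≠ 0 → (n : F) ≠ 0) {R : F[X]}
    (hR : ∀ l < M, ((twistedDerivative f 0 ^ l) R).eval a = 0) : (X - C a) ^ M ∣ R := by
  induction M generalizing R with
  | zero => simp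
  | succ M ih =>
    have hcop : IsCoprime ((X - C a) ^ M) f :=
      ((irreducible_X_sub_C a).coprime_iff_not_dvd.mpr
        fun h ↦ hf (dvd_iff_isRoot.mp h)).pow_left
    have ih' := @ih fun n hn ↦ hM n (hn.trans M.lt_succ_self)
    have hdvd : (X - C a) ^ M ∣ R := ih' fun l hl ↦ hR l (hl.trans M.lt_succ_self)
    have hdvd' : (X - C a) ^ M ∣ f * derivative R := by
      rw [← twistedDerivative_zero_apply]
      refine ih' fun l hl ↦ ?_
      simpa [pow_succ] using hR (l + 1) (Nat.succ_lt_succ hl)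
    exact X_sub_C_pow_succ_dvd (hM M M.lt_succ_self) (by simpa using hR 0 M.succ_pos) hdvd
      (hcop.dvd_of_dvd_mul_left hdvd')

end Field

end TwistedDerivative

section Stepanov

open Polynomial

lemma sum_ne_zero_of_injOn_natTrailingDegree {R ι : Type*} [Semiring R] {s : Finset ι}
    {P : ι → R[X]} (hne : ∃ i ∈ s, P i ≠ 0)
    (hinj : Set.InjOn (fun i ↦ (P i).natTrailingDegree) {i ∈ s | P i ≠ 0}) :
    ∑ i ∈ s, P i ≠ 0 := by
  classical
  obtain ⟨i, hi, hmin⟩ := Finset.exists_min_image (s.filter (P · ≠ 0))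
    (fun i ↦ (P i).natTrailingDegree) (by simpa [Finset.Nonempty] using hne)
  simp only [Finset.mem_filter] at hi hmin
  intro hsum
  apply hi.2
  rw [← trailingCoeff_eq_zero, trailingCoeff, ← coeff_zero (P i).natTrailingDegree, ← hsum,
    finsetSum_coeff, Finset.sum_eq_single_of_mem i hi.1]
  intro j hj hji
  by_cases hPj : P j = 0
  · simp [hPj]
  · exact coeff_eq_zero_of_lt_natTrailingDegree <|
      (hmin j ⟨hj, hPj⟩).lt_of_ne fun h ↦ hji (hinj ⟨hj, hPj⟩ hi h.symm)

lemma natTrailingDegree_pow_of_noZeroDivisors {R : Type*} [Semiring R] [NoZeroDivisors R]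
    {f : R[X]} (hf : f ≠ 0) (n : ℕ) : (f ^ n).natTrailingDegree = n * f.natTrailingDegree := by
  induction n with
  | zero => simp
  | succ n ih => rw [pow_succ, natTrailingDegree_mul (pow_ne_zero n hf) hf, ih, Nat.succ_mul]

lemma exists_degreeLT_ne_zero_of_card_lt {F ι : Type*} [Field F] [Fintype ι] {K D M : ℕ}
    (P : Fin M → ι → F[X] →ₗ[F] F[X])
    (hP : ∀ l i, ∀ k ∈ degreeLT F K, P l i k ∈ degreeLT F D)
    (hcard : M * D < Fintype.card ι * K) :
    ∃ k : ι → F[X], k ≠ 0 ∧ (∀ i, k i ∈ degreeLT F K) ∧ ∀ l, ∑ i, P l i (k i) = 0 := by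
  have hfin (n : ℕ) : Module.Finite F (degreeLT F n) :=
    Module.Finite.equiv (degreeLTEquiv F n).symm
  have hrank (n : ℕ) : Module.finrank F (degreeLT F n) = n := by
    simp [(degreeLTEquiv F n).finrank_eq]
  let L : (ι → degreeLT F K) →ₗ[F] (Fin M → degreeLT F D) :=
    LinearMap.pi fun l ↦ ∑ i, (P l i).restrict (hP l i) ∘ₗ LinearMap.proj i
  have hL : Module.finrank F (Fin M → degreeLT F D) < Module.finrank F (ι → degreeLT F K) := by
    simpa [Module.finrank_pi_fintype, hrank] using hcard
  obtain ⟨v, hv, hv0⟩ := (Submodule.ne_bot_iff _).mp (LinearMap.ker_ne_bot_of_finrank_lt hL)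
  refine ⟨fun i ↦ v i, fun h ↦ hv0 <| funext fun i ↦ Subtype.ext (congrFun h i),
    fun i ↦ (v i).2, fun l ↦ ?_⟩
  have hLv : (L v l : F[X]) = 0 := by rw [LinearMap.mem_ker.mp hv]; rfl
  simpa [L] using hLv

section Digits

variable {p q g e K i i' j j' t t' : ℕ}

lemma mul_add_sq_div_eq (hg : q * g + 1 = p) (he : e ≤ q) (hK : q * K + q * q ≤ p)
    (hi : i < q) (ht : t < K) : (q * (t + g * i * e + p * j) + q * q) / p = i * e + q * j := by
  have hie : i * e ≤ q * q := Nat.mul_le_mul hi.le he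
  have hsplit : q * (t + g * i * e + p * j) + q * q =
      (q * t + q * q - i * e) + p * (i * e + q * j) := by
    have : p * (i * e) = q * g * (i * e) + i * e := by rw [← hg]; ring
    zify [show i * e ≤ q * t + q * q by lia] at this ⊢
    linarith
  have hlt : q * t + q * q - i * e < p := by
    have : q * t < q * K := Nat.mul_lt_mul_of_pos_left ht (by lia)
    lia
  rw [hsplit, Nat.add_mul_div_left _ _ (by lia), Nat.div_eq_of_lt hlt, zero_add]

lemma eq_and_eq_of_add_mul_add_mul_eq (hg : q * g + 1 = p) (he : e ≤ q) (hcop : e.Coprime q)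
    (hK : q * K + q * q ≤ p) (hi : i < q) (hi' : i' < q) (ht : t < K) (ht' : t' < K)
    (h : t + g * i * e + p * j = t' + g * i' * e + p * j') : i = i' ∧ j = j' := by
  have hdiv : i * e + q * j = i' * e + q * j' := by
    rw [← mul_add_sq_div_eq hg he hK hi ht, h, mul_add_sq_div_eq hg he hK hi' ht']
  have hmod : i * e ≡ i' * e [MOD q] := by
    simpa [Nat.ModEq] using congrArg (· % q) hdiv
  obtain rfl : i = i' :=
    (Nat.ModEq.cancel_right_of_coprime hcop.symm hmod).eq_of_lt_of_lt hi hi'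
  exact ⟨rfl, Nat.eq_of_mul_eq_mul_left (Nat.zero_lt_of_lt hi) (Nat.add_left_cancel hdiv)⟩

end Digits

variable {p q g J K M : ℕ} [Fact p.Prime] {f : (ZMod p)[X]}

lemma exists_coeffs (a : ZMod p) (hcard : M * (K + M * f.natDegree + J) < q * J * K) :
    ∃ k : Fin q × Fin J → (ZMod p)[X], k ≠ 0 ∧ (∀ i, (k i).degree < K) ∧ ∀ l < M,
      ∑ i, (twistedDerivative f (g * i.1) ^ l) (k i) * C (a ^ (i.1 : ℕ)) * X ^ (i.2 : ℕ) = 0 := by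
  let P (l : Fin M) (i : Fin q × Fin J) : (ZMod p)[X] →ₗ[ZMod p] (ZMod p)[X] :=
    LinearMap.mulRight (ZMod p) (C (a ^ (i.1 : ℕ)) * X ^ (i.2 : ℕ)) ∘ₗ
      twistedDerivative f (g * i.1) ^ (l : ℕ)
  have hP (l : Fin M) (i : Fin q × Fin J) (k) (hk : k ∈ degreeLT (ZMod p) K) :
      P l i k ∈ degreeLT (ZMod p) (K + M * f.natDegree + J) := by
    rw [mem_degreeLT] at hk ⊢
    have hl : l * f.natDegree ≤ M * f.natDegree := Nat.mul_le_mul_right _ l.2.le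
    have hCX : (C (a ^ (i.1 : ℕ)) * X ^ (i.2 : ℕ)).degree ≤ (J : WithBot ℕ) :=
      (degree_C_mul_X_pow_le _ _).trans (Nat.cast_le.mpr i.2.2.le)
    calc (P l i k).degree
        ≤ ((twistedDerivative f (g * i.1) ^ (l : ℕ)) k).degree + J :=
          (degree_mul_le _ _).trans (add_le_add le_rfl hCX)
      _ ≤ k.degree + (l * f.natDegree : ℕ) + J := by
          gcongr; exact degree_twistedDerivative_pow_le ..
      _ ≤ k.degree + (M * f.natDegree + J : ℕ) := by
          rw [add_assoc, ← Nat.cast_add]; gcongr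
      _ < (K + M * f.natDegree + J : ℕ) := by
          rw [add_assoc, Nat.cast_add K]
          exact WithBot.add_lt_add_right (WithBot.natCast_ne_bot _) hk
  obtain ⟨k, hk0, hk, hsum⟩ := exists_degreeLT_ne_zero_of_card_lt P hP (by simpa using hcard)
  exact ⟨k, hk0, fun i ↦ mem_degreeLT.mp (hk i),
    fun l hl ↦ by simpa [P, mul_assoc] using hsum ⟨l, hl⟩⟩

lemma sum_mul_pow_mul_X_pow_ne_zero (hg : q * g + 1 = p) (hf : f.natTrailingDegree < q)
    (hcop : f.natTrailingDegree.Coprime q) (hf0 : f ≠ 0) (hK : q * K + q * q ≤ p)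
    {k : Fin q × Fin J → (ZMod p)[X]} (hk0 : k ≠ 0) (hk : ∀ i, (k i).degree < K) :
    ∑ i, k i * f ^ (g * i.1 : ℕ) * X ^ (p * i.2 : ℕ) ≠ 0 := by
  have hne {i} (hi : k i ≠ 0) : k i * f ^ (g * i.1 : ℕ) ≠ 0 := mul_ne_zero hi (pow_ne_zero _ hf0)
  have htrail {i} (hi : k i ≠ 0) :
      (k i * f ^ (g * i.1 : ℕ) * X ^ (p * i.2 : ℕ)).natTrailingDegree =
        (k i).natTrailingDegree + g * i.1 * f.natTrailingDegree + p * i.2 := by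
    rw [natTrailingDegree_mul_X_pow (hne hi), natTrailingDegree_mul hi (pow_ne_zero _ hf0),
      natTrailingDegree_pow_of_noZeroDivisors hf0]
  have hlt {i} (hi : k i ≠ 0) : (k i).natTrailingDegree < K :=
    natTrailingDegree_le_natDegree _ |>.trans_lt <| (natDegree_lt_iff_degree_lt hi).mpr (hk i)
  obtain ⟨i, hi⟩ := Function.ne_iff.mp hk0
  refine sum_ne_zero_of_injOn_natTrailingDegree
    ⟨i, Finset.mem_univ _, mul_ne_zero (hne hi) (pow_ne_zero _ X_ne_zero)⟩ ?_
  rintro i ⟨-, hi⟩ j ⟨-, hj⟩ hij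
  have hi' : k i ≠ 0 := by rintro h; simp [h] at hi
  have hj' : k j ≠ 0 := by rintro h; simp [h] at hj
  simp only [htrail hi', htrail hj'] at hij
  have := eq_and_eq_of_add_mul_add_mul_eq hg hf.le hcop hK i.1.2 j.1.2 (hlt hi') (hlt hj') hij
  exact Prod.ext (Fin.ext this.1) (Fin.ext this.2)

lemma natDegree_sum_mul_pow_mul_X_pow_le (hg : q * g ≤ p) {k : Fin q × Fin J → (ZMod p)[X]}
    (hk : ∀ i, (k i).degree < K) :
    (∑ i, k i * f ^ (g * i.1 : ℕ) * X ^ (p * i.2 : ℕ)).natDegree ≤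
      K + p * f.natDegree + p * J := by
  refine natDegree_sum_le_of_forall_le _ _ fun i _ ↦ ?_
  have hi : g * i.1 ≤ p := (Nat.mul_le_mul_left g i.1.2.le).trans (by rwa [mul_comm])
  refine natDegree_mul_le_of_le (natDegree_mul_le_of_le
    (natDegree_le_of_degree_le (hk i).le) (natDegree_pow_le.trans ?_)) ?_
  · gcongr
  · rw [natDegree_X_pow]
    exact Nat.mul_le_mul_left _ i.2.2.le

lemma X_sub_C_pow_dvd_sum_mul_pow_mul_X_pow {a x : ZMod p} (hMp : M ≤ p) (hx : f.eval x ≠ 0)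
    (hxa : f.eval x ^ g = a) {k : Fin q × Fin J → (ZMod p)[X]}
    (hk : ∀ l < M,
      ∑ i, (twistedDerivative f (g * i.1) ^ l) (k i) * C (a ^ (i.1 : ℕ)) * X ^ (i.2 : ℕ) = 0) :
    (X - C x) ^ M ∣ ∑ i, k i * f ^ (g * i.1 : ℕ) * X ^ (p * i.2 : ℕ) := by
  refine X_sub_C_pow_dvd_of_eval_twistedDerivative hx (fun n hn hn0 h ↦ ?_) fun l hl ↦ ?_
  · rw [ZMod.natCast_eq_zero_iff] at h
    exact absurd (Nat.le_of_dvd (Nat.pos_of_ne_zero hn0) h) (by lia)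
  · rw [twistedDerivative_zero_pow_sum, ← eval_zero (x := x), ← hk l hl]
    simp only [eval_finsetSum, eval_mul, eval_pow, eval_C, eval_X, pow_mul, hxa, ZMod.pow_card]

lemma card_mul_le_natDegree {F : Type*} [Field F] {R : F[X]} (hR : R ≠ 0) {S : Finset F} {M : ℕ}
    (hS : ∀ x ∈ S, (X - C x) ^ M ∣ R) : S.card * M ≤ R.natDegree := by
  have hdvd : ∏ x ∈ S, (X - C x) ^ M ∣ R := Finset.prod_dvd_of_coprime
    (fun x _ y _ hxy ↦ (pairwise_coprime_X_sub_C (s := id) Function.injective_id hxy).pow) hS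
  refine le_trans (le_of_eq ?_) (natDegree_le_of_dvd hdvd hR)
  rw [Finset.prod_pow, natDegree_pow, natDegree_prod _ _ fun x _ ↦ X_sub_C_ne_zero x]
  simp [mul_comm]

lemma card_mul_le_of_window (hq : 2 ≤ q) (hg : q * g + 1 = p) (hf : f.natTrailingDegree < q)
    (hcop : f.natTrailingDegree.Coprime q) (hMp : M ≤ p) (hK : q * K + q * q ≤ p)
    (hcard : M * (K + M * f.natDegree + J) < q * J * K) (a : ZMod p) :
    Finset.card {x | f.eval x ≠ 0 ∧ f.eval x ^ g = a} * M ≤ K + p * f.natDegree + p * J := by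
  have hf0 : f ≠ 0 := by
    rintro rfl
    have : q = 1 := by simpa using hcop
    lia
  obtain ⟨k, hk0, hk, hsum⟩ := exists_coeffs (g := g) a hcard
  refine (card_mul_le_natDegree (sum_mul_pow_mul_X_pow_ne_zero hg hf hcop hf0 hK hk0 hk)
    fun x hx ↦ ?_).trans (natDegree_sum_mul_pow_mul_X_pow_le (by lia) hk)
  obtain ⟨hx0, hxa⟩ := (Finset.mem_filter.mp hx).2
  exact X_sub_C_pow_dvd_sum_mul_pow_mul_X_pow hMp hx0 hxa hsum

section Parameters

lemma mul_div_sub_add_mul_le {p q : ℕ} (hq : 0 < q) (hp : q * (q + 1) ≤ p) :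
    q * (p / q - q) + q * q ≤ p ∧ p < q * (p / q - q) + q * q + q ∧ 0 < p / q - q := by
  have hqp : q + 1 ≤ p / q := by rwa [Nat.le_div_iff_mul_le hq, mul_comm]
  have hK : q * (p / q - q) + q * q = q * (p / q) := by rw [← mul_add, Nat.sub_add_cancel (by lia)]
  have := Nat.mul_div_le p q
  have := Nat.lt_mul_div_succ p hq
  rw [mul_add] at this
  lia

lemma sqrt_mul_lt_of_le {p q m : ℕ} (hq : 2 ≤ q) (hp : 4 * (m + 3) ^ 2 * q ^ 2 ≤ p) :
    p.sqrt * (p / q - q + p.sqrt * m + (p.sqrt / q + m + 3)) <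
      q * (p.sqrt / q + m + 3) * (p / q - q) := by
  have hpq : 4 * (m + 3) * (q * q) ≤ p := by nlinarith [Nat.zero_le (m * (m + 3) * q ^ 2)]
  obtain ⟨-, hKlt, hKpos⟩ := mul_div_sub_add_mul_le (p := p) (q := q) (by lia) (by nlinarith)
  set K := p / q - q
  set M := p.sqrt
  have hMsq : M * M ≤ p := Nat.sqrt_le p
  have hM : 2 * (m + 3) * q ≤ M := by rw [Nat.le_sqrt]; nlinarith
  have hJlow : (M + q * (m + 2)) * K ≤ q * (M / q + m + 3) * K := by
    have := Nat.lt_mul_div_succ M (show 0 < q by lia)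
    gcongr
    nlinarith
  have hJup : 2 * (M * (M / q + m + 3)) ≤ p + 2 * (M * (m + 3)) := by
    have : 2 * (M / q) ≤ M :=
      (Nat.mul_le_mul_right _ hq).trans (Nat.mul_div_le M q)
    nlinarith
  have hMm : 4 * (M * (m + 3)) ≤ p := by nlinarith
  have hKp : (m + 2) * p ≤ (m + 2) * (q * K) + (m + 2) * (q * q + q) := by nlinarith
  have hqq : 2 * ((m + 2) * (q * q + q)) ≤ p := by nlinarith
  have hMMm : M * (M * m) ≤ p * m := by nlinarith
  nlinarith

end Parameters

theorem card_mul_sqrt_le {m : ℕ} (hq : 2 ≤ q) (hg : q * g + 1 = p) (hf : f.natTrailingDegree < q)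
    (hcop : f.natTrailingDegree.Coprime q) (hm : f.natDegree ≤ m)
    (hp : 4 * (m + 3) ^ 2 * q ^ 2 ≤ p) (a : ZMod p) :
    Finset.card {x | f.eval x ≠ 0 ∧ f.eval x ^ g = a} * p.sqrt ≤
      p * (p.sqrt / q + 2 * m + 5) := by
  have hqq : q * (q + 1) ≤ p := by nlinarith [Nat.zero_le (m * (m + 6) * q ^ 2)]
  have hK := (mul_div_sub_add_mul_le (by lia) hqq).1
  have hcard : p.sqrt * (p / q - q + p.sqrt * f.natDegree + (p.sqrt / q + m + 3)) <
      q * (p.sqrt / q + m + 3) * (p / q - q) :=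
    lt_of_le_of_lt (by gcongr) (sqrt_mul_lt_of_le hq hp)
  refine (card_mul_le_of_window hq hg hf hcop (Nat.sqrt_le_self p) hK hcard a).trans ?_
  have hKp : p / q - q ≤ p := (Nat.sub_le _ _).trans (Nat.div_le_self p q)
  calc p / q - q + p * f.natDegree + p * (p.sqrt / q + m + 3)
      ≤ p + p * m + p * (p.sqrt / q + m + 3) := by gcongr
    _ ≤ p * (p.sqrt / q + 2 * m + 5) := by nlinarith

theorem card_eval_pow_eq_le {m : ℕ} (hq : 2 ≤ q) (hg : q * g + 1 = p)
    (hf : f.natTrailingDegree < q) (hcop : f.natTrailingDegree.Coprime q) (hm : f.natDegree ≤ m)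
    (hp : 4 * (m + 3) ^ 2 * q ^ 2 ≤ p) (a : ZMod p) :
    (Finset.card {x | f.eval x ≠ 0 ∧ f.eval x ^ g = a} : ℝ) ≤
      p / q + (4 * m + 10) * √p := by
  have hM : 0 < p.sqrt := Nat.sqrt_pos.mpr (by lia)
  have hsqrt : √(p : ℝ) ≤ 2 * p.sqrt := by
    have h1 : (1 : ℝ) ≤ p.sqrt := by exact_mod_cast hM
    linarith [Real.real_sqrt_le_nat_sqrt_succ (a := p)]
  have hp_le : (p : ℝ) ≤ 2 * √p * p.sqrt := by
    nlinarith [Real.mul_self_sqrt (Nat.cast_nonneg (α := ℝ) p), Real.sqrt_nonneg (p : ℝ)]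
  refine le_of_mul_le_mul_right ?_ (Nat.cast_pos.mpr hM)
  calc (Finset.card {x | f.eval x ≠ 0 ∧ f.eval x ^ g = a} : ℝ) * p.sqrt
      ≤ p * ((p.sqrt / q : ℕ) + 2 * m + 5) := by
        exact_mod_cast card_mul_sqrt_le hq hg hf hcop hm hp a
    _ ≤ p * (p.sqrt / q + 2 * m + 5) := by gcongr; exact Nat.cast_div_le
    _ = p / q * p.sqrt + p * (2 * m + 5) := by ring
    _ ≤ p / q * p.sqrt + 2 * √p * p.sqrt * (2 * m + 5) := by gcongr
    _ = (p / q + (4 * m + 10) * √p) * p.sqrt := by ring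

end Stepanov

section CharacterSums

open Polynomial

lemma mulChar_apply_eq_one_iff_pow_eq_one {F R : Type*} [Field F] [Fintype F] [CommRing R]
    {χ : MulChar F R} {g : ℕ} (hF : orderOf χ * g + 1 = Fintype.card F) {y : F} (hy : y ≠ 0) :
    χ y = 1 ↔ y ^ g = 1 := by
  classical
  obtain ⟨ζ, hζ⟩ := IsCyclic.exists_generator (α := Fˣ)
  have hχζ : orderOf (χ ζ) = orderOf χ := by
    refine orderOf_eq_orderOf_iff.mpr fun n ↦ ?_
    rw [MulChar.eq_iff hζ, MulChar.pow_apply_coe, MulChar.one_apply_coe]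
  have hζ_order : orderOf ζ = orderOf χ * g := by
    rw [orderOf_eq_card_of_forall_mem_zpowers hζ, Nat.card_eq_fintype_card, Fintype.card_units,
      ← hF, Nat.add_sub_cancel]
  have hg : g ≠ 0 := by
    rintro rfl
    exact (orderOf_pos ζ).ne' (by simpa using hζ_order)
  obtain ⟨n, hn⟩ := mem_powers_iff_mem_zpowers.mpr (hζ (Units.mk0 y hy))
  obtain rfl : (ζ : F) ^ n = y := by simpa using congrArg Units.val hn
  rw [map_pow, ← orderOf_dvd_iff_pow_eq_one, hχζ, ← pow_mul, ← Units.val_pow_eq_pow_val,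
    Units.val_eq_one, ← orderOf_dvd_iff_pow_eq_one, hζ_order,
    Nat.mul_dvd_mul_iff_right (Nat.pos_of_ne_zero hg)]

lemma sum_nthRootsFinset_one {R : Type*} [CommRing R] [IsDomain R] {ζ : R} {q : ℕ}
    (hζ : IsPrimitiveRoot ζ q) (hq : 1 < q) : ∑ z ∈ nthRootsFinset q (1 : R), z = 0 := by
  have : NeZero q := ⟨Nat.ne_zero_of_lt hq⟩
  rw [← hζ.geom_sum_eq_zero hq]
  symm
  refine Finset.sum_nbij (ζ ^ ·) (fun t _ ↦ ?_) (fun s hs t ht ↦ ?_) (fun z hz ↦ ?_)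
    fun _ _ ↦ rfl
  · rw [mem_nthRootsFinset (NeZero.pos q), pow_right_comm, hζ.pow_eq_one, one_pow]
  · exact hζ.pow_inj (Finset.mem_range.mp hs) (Finset.mem_range.mp ht)
  · obtain ⟨t, ht, h⟩ := hζ.eq_pow_of_pow_eq_one ((mem_nthRootsFinset (NeZero.pos q) 1).mp hz)
    exact ⟨t, Finset.mem_coe.mpr (Finset.mem_range.mpr ht), h⟩

lemma norm_sum_le_of_card_fiber_le {α : Type*} [Fintype α] {ψ : α → ℂ} {q : ℕ} (hq : 1 < q)
    (hψ : ∀ x, ψ x ≠ 0 → ψ x ^ q = 1) {U : ℝ}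
    (hU : ∀ z ≠ 0, (Finset.card {x | ψ x = z} : ℝ) ≤ U) :
    ‖∑ x, ψ x‖ ≤ q * U - Finset.card {x | ψ x ≠ 0} := by
  classical
  have hq0 : q ≠ 0 := Nat.ne_zero_of_lt hq
  have hζ := Complex.isPrimitiveRoot_exp q hq0
  set T : Finset ℂ := nthRootsFinset q 1
  have hT {z : ℂ} (hz : z ∈ T) : z ^ q = 1 := (mem_nthRootsFinset (Nat.pos_of_ne_zero hq0) 1).mp hz
  set S : Finset α := {x | ψ x ≠ 0}
  let N (z : ℂ) : Finset α := {x ∈ S | ψ x = z}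
  have hmaps : ∀ x ∈ S, ψ x ∈ T := fun x hx ↦
    (mem_nthRootsFinset (Nat.pos_of_ne_zero hq0) 1).mpr (hψ x (Finset.mem_filter.mp hx).2)
  have hNU : ∀ z ∈ T, ((N z).card : ℝ) ≤ U := fun z hz ↦
    le_trans (Nat.cast_le.mpr <| Finset.card_le_card <|
        Finset.filter_subset_filter _ (Finset.subset_univ S))
      (hU z (by rintro rfl; simpa [hq0] using hT hz))
  have hsum : ∑ x, ψ x = ∑ z ∈ T, z * ((N z).card - U : ℝ) := by
    rw [← Finset.sum_filter_ne_zero, ← Finset.sum_fiberwise_of_maps_to hmaps]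
    simp only [Complex.ofReal_sub, Complex.ofReal_natCast, mul_sub, Finset.sum_sub_distrib,
      ← Finset.sum_mul, sum_nthRootsFinset_one hζ hq, zero_mul, sub_zero, T]
    refine Finset.sum_congr rfl fun z _ ↦ ?_
    rw [Finset.sum_congr rfl fun x hx ↦ (Finset.mem_filter.mp hx).2, Finset.sum_const,
      nsmul_eq_mul, mul_comm]
  calc ‖∑ x, ψ x‖ ≤ ∑ z ∈ T, ‖z * ((N z).card - U : ℝ)‖ := hsum ▸ norm_sum_le _ _
    _ = ∑ z ∈ T, (U - (N z).card) := by
        refine Finset.sum_congr rfl fun z hz ↦ ?_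
        rw [norm_mul, Complex.norm_eq_one_of_pow_eq_one (hT hz) hq0, one_mul, Complex.norm_real,
          Real.norm_eq_abs, abs_of_nonpos (sub_nonpos.mpr (hNU z hz)), neg_sub]
    _ = q * U - S.card := by
        rw [Finset.sum_sub_distrib, Finset.card_eq_sum_card_fiberwise hmaps]
        simp [T, N, hζ.card_nthRootsFinset]

variable {p q g : ℕ} [Fact p.Prime] {χ : MulChar (ZMod p) ℂ}

lemma mulChar_apply_pow_orderOf (hq : orderOf χ = q) {y : ZMod p} (hy : y ≠ 0) : χ y ^ q = 1 := by
  have := MulChar.pow_apply_coe χ (orderOf χ) (Units.mk0 y hy)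
  rw [pow_orderOf_eq_one, MulChar.one_apply_coe] at this
  rw [← hq]
  exact this.symm

lemma card_mulChar_eval_eq_le {f : (ZMod p)[X]} {m : ℕ} (hq : q.Prime) (hg : q * g + 1 = p)
    (hχ : orderOf χ = q) {α : ZMod p} (hα : 0 < f.rootMultiplicity α)
    (hαq : f.rootMultiplicity α < q) (hm : f.natDegree ≤ m)
    (hp : 4 * (m + 3) ^ 2 * q ^ 2 ≤ p) {z : ℂ} (hz : z ≠ 0) :
    (Finset.card {x | χ (f.eval x) = z} : ℝ) ≤ p / q + (4 * m + 10) * √p := by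
  rcases Finset.eq_empty_or_nonempty {x | χ (f.eval x) = z} with h | ⟨x₀, hx₀⟩
  · rw [h, Finset.card_empty, Nat.cast_zero]
    positivity
  rw [Finset.mem_filter] at hx₀
  have hne {x} (hx : χ (f.eval x) = z) : f.eval x ≠ 0 := by
    intro h
    rw [h, MulChar.map_zero] at hx
    exact hz hx.symm
  have hpow {x} (hx : χ (f.eval x) = z) : f.eval x ^ g = f.eval x₀ ^ g := by
    have hy : f.eval x / f.eval x₀ ≠ 0 := div_ne_zero (hne hx) (hne hx₀.2)
    have hχy : χ (f.eval x / f.eval x₀) = 1 := by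
      refine mul_right_cancel₀ hz ?_
      rw [one_mul, ← hx₀.2, ← map_mul, div_mul_cancel₀ _ (hne hx₀.2), hx, hx₀.2]
    rw [mulChar_apply_eq_one_iff_pow_eq_one (g := g) (by rw [hχ, hg, ZMod.card]) hy, div_pow] at hχy
    exact (div_eq_one_iff_eq (pow_ne_zero g (hne hx₀.2))).mp hχy
  rw [rootMultiplicity_eq_natTrailingDegree] at hα hαq
  refine le_trans ?_ (card_eval_pow_eq_le hq.two_le hg hαq
    (Nat.coprime_of_lt_prime hα.ne' hαq hq).symm
    ((natDegree_comp (p := f) (q := X + C α)).trans_le (by simpa using hm)) hp (f.eval x₀ ^ g))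
  refine Nat.cast_le.mpr (Finset.card_le_card_of_injOn (· - α) (fun x hx ↦ ?_)
    sub_left_injective.injOn)
  have hx : χ (f.eval x) = z := by simpa using hx
  simpa using And.intro (hne hx) (hpow hx)

theorem norm_sum_mulChar_eval_le {f : (ZMod p)[X]} {m : ℕ} (hq : q.Prime) (hg : q * g + 1 = p)
    (hχ : orderOf χ = q) {α : ZMod p} (hα : 0 < f.rootMultiplicity α)
    (hαq : f.rootMultiplicity α < q) (hm : f.natDegree ≤ m)
    (hp : 4 * (m + 3) ^ 2 * q ^ 2 ≤ p) :
    ‖∑ x, χ (f.eval x)‖ ≤ q * ((5 * m + 10) * √p) := by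
  classical
  have hf0 : f ≠ 0 := by rintro rfl; simp at hα
  have hsqrt : 1 ≤ √(p : ℝ) := by
    rw [Real.one_le_sqrt]; exact_mod_cast (Fact.out : p.Prime).one_le
  have hq1 : (1 : ℝ) ≤ q := by exact_mod_cast hq.one_le
  have hcard : (p : ℝ) - m ≤ Finset.card {x | χ (f.eval x) ≠ 0} := by
    have hroots : Finset.univ ⊆ f.roots.toFinset ∪ ({x | χ (f.eval x) ≠ 0} : Finset (ZMod p)) := by
      intro x _
      by_cases hx : f.eval x = 0
      · simp [hf0, hx]
      · simp [(IsUnit.mk0 _ hx).map χ |>.ne_zero]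
    have h := (Finset.card_le_card hroots).trans (Finset.card_union_le _ _)
    rw [Finset.card_univ, ZMod.card] at h
    have hm' := (Multiset.toFinset_card_le f.roots).trans (f.card_roots'.trans hm)
    rw [sub_le_iff_le_add']
    exact_mod_cast h.trans (Nat.add_le_add_right hm' _)
  calc ‖∑ x, χ (f.eval x)‖
      ≤ q * (p / q + (4 * m + 10) * √p) - Finset.card {x | χ (f.eval x) ≠ 0} :=
        norm_sum_le_of_card_fiber_le hq.one_lt
          (fun x hx ↦ mulChar_apply_pow_orderOf hχ fun h ↦ hx (by rw [h, MulChar.map_zero]))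
          fun z hz ↦ card_mulChar_eval_eq_le hq hg hχ hα hαq hm hp hz
    _ ≤ q * (p / q + (4 * m + 10) * √p) - (p - m) := by gcongr
    _ = q * ((4 * m + 10) * √p) + 1 * (m * 1) := by
        have : (q : ℝ) ≠ 0 := by positivity
        field_simp
        ring
    _ ≤ q * ((4 * m + 10) * √p) + q * (m * √p) := by gcongr
    _ = q * ((5 * m + 10) * √p) := by ring

end CharacterSums

section Moments

open Polynomial

lemma card_filter_card_image_le {α ι : Type*} [DecidableEq α] [Fintype ι] [DecidableEq ι]
    [Nonempty ι] (s : Finset α) (r : ℕ) :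
    Finset.card {u ∈ Fintype.piFinset fun _ : ι ↦ s | (Finset.univ.image u).card ≤ r} ≤
      s.card ^ r * r ^ Fintype.card ι := by
  let compose (wh : (Fin r → α) × (ι → Fin r)) : ι → α := wh.1 ∘ wh.2
  have hsub : {u ∈ Fintype.piFinset fun _ : ι ↦ s | (Finset.univ.image u).card ≤ r} ⊆
      (Fintype.piFinset (fun _ : Fin r ↦ s) ×ˢ Finset.univ).image compose := by
    intro u hu
    rw [Finset.mem_filter, Fintype.mem_piFinset] at hu
    set T := Finset.univ.image u
    have hmem (i : ι) : u i ∈ T := Finset.mem_image_of_mem u (Finset.mem_univ i)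
    obtain ⟨φ⟩ : Nonempty (T ↪ Fin r) :=
      Function.Embedding.nonempty_of_card_le (by simpa using hu.2)
    have : Nonempty T := ⟨_, hmem (Classical.arbitrary ι)⟩
    refine Finset.mem_image.mpr
      ⟨(fun k ↦ (Function.invFun φ k : T), fun i ↦ φ ⟨u i, hmem i⟩), ?_, ?_⟩
    · simp only [Finset.mem_product, Fintype.mem_piFinset, Finset.mem_univ, and_true]
      intro k
      obtain ⟨i, -, hi⟩ := Finset.mem_image.mp (Function.invFun φ k).2
      exact hi ▸ hu.1 i
    · funext i
      simp [compose, Function.leftInverse_invFun φ.injective _]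
  refine (Finset.card_le_card hsub).trans (Finset.card_image_le.trans ?_)
  simp [Finset.card_product, Fintype.card_piFinset]

lemma card_filter_forall_exists_ne_eq_le {α ι : Type*} [DecidableEq α] [Fintype ι] [DecidableEq ι]
    [Nonempty ι] {r : ℕ} (hr : Fintype.card ι ≤ 2 * r) (s : Finset α) :
    Finset.card {u ∈ Fintype.piFinset fun _ : ι ↦ s | ∀ i, ∃ j, j ≠ i ∧ u j = u i} ≤
      s.card ^ r * r ^ Fintype.card ι := by
  refine (Finset.card_le_card <| Finset.monotone_filter_right _ fun u _ hu ↦ ?_).trans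
    (card_filter_card_image_le s r)
  have h : 2 * (Finset.univ.image u).card ≤ (Finset.univ : Finset ι).card := by
    refine Finset.mul_card_image_le_card _ _ fun b hb ↦ ?_
    obtain ⟨i, -, rfl⟩ := Finset.mem_image.mp hb
    obtain ⟨j, hji, hj⟩ := hu i
    rw [← Finset.card_pair hji]
    refine Finset.card_le_card fun k hk ↦ ?_
    rcases Finset.mem_insert.mp hk with rfl | hk
    · simp [hj]
    · simp [Finset.mem_singleton.mp hk]
  rw [Finset.card_univ] at h
  lia

/-- The exponents in the expansion of `‖z‖ ^ (2r) = z ^ r * (star z) ^ r` when `star z` is replaced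
by `z ^ (q - 1)`, as is possible for values of a character of order `q`. -/
def momentExponent (r q : ℕ) : Fin r ⊕ Fin r → ℕ :=
  Sum.elim (fun _ ↦ 1) fun _ ↦ q - 1

lemma momentExponent_pos {r q : ℕ} (hq : 1 < q) (i : Fin r ⊕ Fin r) : 0 < momentExponent r q i := by
  cases i <;> simp [momentExponent, hq]

lemma momentExponent_lt {r q : ℕ} (hq : 1 < q) (i : Fin r ⊕ Fin r) : momentExponent r q i < q := by
  cases i <;> simp only [momentExponent, Sum.elim_inl, Sum.elim_inr] <;> lia

lemma norm_sum_pow_two_mul {α : Type*} {ψ : α → ℂ} {q : ℕ}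
    (hψ : ∀ b, star (ψ b) = ψ b ^ (q - 1)) (s : Finset α) (r : ℕ) :
    ((‖∑ b ∈ s, ψ b‖ ^ (2 * r) : ℝ) : ℂ) =
      ∑ u ∈ Fintype.piFinset fun _ : Fin r ⊕ Fin r ↦ s, ∏ i, ψ (u i) ^ momentExponent r q i := by
  rw [← Finset.prod_univ_sum (fun _ ↦ s) fun i b ↦ ψ b ^ momentExponent r q i,
    Fintype.prod_sum_type]
  simp only [momentExponent, Sum.elim_inl, Sum.elim_inr, pow_one, Finset.prod_const,
    Finset.card_univ, Fintype.card_fin, ← hψ]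
  rw [← star_sum, ← mul_pow, ← starRingEnd_apply, Complex.mul_conj, Complex.normSq_eq_norm_sq,
    pow_mul]
  norm_cast

lemma star_mulChar_apply {R : Type*} [CommRing R] [Finite Rˣ] {χ : MulChar R ℂ} {q : ℕ}
    (hq : 1 < q) (hχ : orderOf χ = q) (a : R) :
    star (χ a) = χ a ^ (q - 1) := by
  have hinv : χ⁻¹ = χ ^ (q - 1) := by
    rw [inv_eq_iff_mul_eq_one, ← pow_succ', Nat.sub_add_cancel hq.le, ← hχ, pow_orderOf_eq_one]
  rw [MulChar.star_apply', hinv, MulChar.pow_apply' _ (Nat.sub_ne_zero_of_lt hq)]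

variable {p q g : ℕ} [Fact p.Prime] {χ : MulChar (ZMod p) ℂ}

lemma norm_sum_prod_mulChar_le {ι : Type*} [Fintype ι] (hq : q.Prime) (hg : q * g + 1 = p)
    (hχ : orderOf χ = q) (hp : 4 * (Fintype.card ι * q + 3) ^ 2 * q ^ 2 ≤ p) {e : ι → ℕ}
    (he0 : ∀ i, 0 < e i) (heq : ∀ i, e i < q) {u : ι → ZMod p} {i₀ : ι}
    (hi₀ : ∀ i ≠ i₀, u i ≠ u i₀) :
    ‖∑ x, ∏ i, χ (x + u i) ^ e i‖ ≤ q * ((5 * (Fintype.card ι * q : ℕ) + 10) * √p) := by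
  classical
  set G : (ZMod p)[X] := ∏ i ∈ Finset.univ.erase i₀, (X + C (u i)) ^ e i
  set f : (ZMod p)[X] := ∏ i, (X + C (u i)) ^ e i
  have hfG : f = (X - C (-u i₀)) ^ e i₀ * G := by
    rw [map_neg, sub_neg_eq_add]
    exact (Finset.mul_prod_erase _ _ (Finset.mem_univ i₀)).symm
  have hG : ¬ G.IsRoot (-u i₀) := by
    simp only [G, IsRoot.def, eval_prod, eval_pow, eval_add, eval_X, eval_C]
    refine Finset.prod_ne_zero_iff.mpr fun i hi ↦ pow_ne_zero _ ?_
    rw [neg_add_eq_sub]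
    exact sub_ne_zero.mpr (hi₀ i (Finset.ne_of_mem_erase hi))
  have hf0 : f ≠ 0 := (monic_prod_of_monic _ _ fun i _ ↦ (monic_X_add_C _).pow _).ne_zero
  have hmult : f.rootMultiplicity (-u i₀) = e i₀ := by
    rw [hfG] at hf0 ⊢
    rw [rootMultiplicity_mul hf0, rootMultiplicity_X_sub_C_pow, rootMultiplicity_eq_zero hG,
      add_zero]
  have hdeg : f.natDegree ≤ Fintype.card ι * q := by
    refine (natDegree_prod_le _ _).trans (Finset.sum_le_card_nsmul _ _ q fun i _ ↦ ?_)
    simpa using (heq i).le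
  have heval (x : ZMod p) : ∏ i, χ (x + u i) ^ e i = χ (f.eval x) := by
    simp [f, eval_prod]
  simp only [heval]
  exact norm_sum_mulChar_eval_le hq hg hχ (hmult ▸ he0 i₀) (hmult ▸ heq i₀) hdeg hp

lemma norm_sum_prod_pow_momentExponent_le {r : ℕ} (hr : 1 ≤ r) (hq : q.Prime) (hg : q * g + 1 = p)
    (hχ : orderOf χ = q) (hp : 100 * r ^ 2 * q ^ 4 ≤ p) {u : Fin r ⊕ Fin r → ZMod p}
    {i₀ : Fin r ⊕ Fin r} (hi₀ : ∀ i ≠ i₀, u i ≠ u i₀) :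
    ‖∑ x, ∏ i, χ (x + u i) ^ momentExponent r q i‖ ≤ 20 * r * q ^ 2 * √p := by
  have hcard : Fintype.card (Fin r ⊕ Fin r) = 2 * r := by simp [two_mul]
  have hrq : 2 ≤ r * q := by nlinarith [hq.two_le]
  have hrq' : (1 : ℝ) ≤ r * q := by exact_mod_cast one_le_two.trans hrq
  calc ‖∑ x, ∏ i, χ (x + u i) ^ momentExponent r q i‖
      ≤ q * ((5 * (2 * r * q : ℕ) + 10) * √p) := by
        have hsize : 4 * (2 * r * q + 3) ^ 2 * q ^ 2 ≤ p := by
          refine le_trans ?_ hp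
          calc 4 * (2 * r * q + 3) ^ 2 * q ^ 2 ≤ 4 * (5 * (r * q)) ^ 2 * q ^ 2 := by
                gcongr; lia
            _ = 100 * r ^ 2 * q ^ 4 := by ring
        simpa only [hcard] using norm_sum_prod_mulChar_le hq hg hχ (by rwa [hcard])
          (momentExponent_pos hq.one_lt) (momentExponent_lt hq.one_lt) hi₀
    _ = q * (10 * (r * q) + 10 * 1) * √p := by push_cast; ring
    _ ≤ q * (10 * (r * q) + 10 * (r * q)) * √p := by gcongr
    _ = 20 * r * q ^ 2 * √p := by ring

lemma norm_prod_mulChar_le {ι : Type*} [Fintype ι] (χ : MulChar (ZMod p) ℂ) (e : ι → ℕ)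
    (u : ι → ZMod p) (x : ZMod p) : ‖∏ i, χ (x + u i) ^ e i‖ ≤ 1 := by
  rw [norm_prod]
  refine Finset.prod_le_one (fun i _ ↦ norm_nonneg _) fun i _ ↦ ?_
  rw [norm_pow]
  exact pow_le_one₀ (norm_nonneg _) (DirichletCharacter.norm_le_one χ _)

theorem sum_norm_sum_mulChar_pow_le {r : ℕ} (hr : 1 ≤ r) (hq : q.Prime) (hg : q * g + 1 = p)
    (hχ : orderOf χ = q) (hp : 100 * r ^ 2 * q ^ 4 ≤ p) (s : Finset (ZMod p)) :
    ∑ x, ‖∑ b ∈ s, χ (x + b)‖ ^ (2 * r) ≤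
      (s.card : ℝ) ^ r * r ^ (2 * r) * p + s.card ^ (2 * r) * (20 * r * q ^ 2 * √p) := by
  classical
  have : NeZero r := ⟨Nat.ne_zero_of_lt hr⟩
  have hcard : Fintype.card (Fin r ⊕ Fin r) = 2 * r := by simp [two_mul]
  set tuples := Fintype.piFinset fun _ : Fin r ⊕ Fin r ↦ s
  let correlation (u : Fin r ⊕ Fin r → ZMod p) : ℂ := ∑ x, ∏ i, χ (x + u i) ^ momentExponent r q i
  let repeated (u : Fin r ⊕ Fin r → ZMod p) : Prop := ∀ i, ∃ j, j ≠ i ∧ u j = u i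
  have hrepeated : ∀ u ∈ tuples.filter repeated, ‖correlation u‖ ≤ p := fun u _ ↦
    (norm_sum_le_of_le Finset.univ fun x _ ↦ norm_prod_mulChar_le χ _ u x).trans_eq
      (by simp [ZMod.card])
  have hisolated : ∀ u ∈ tuples.filter (¬ repeated ·), ‖correlation u‖ ≤ 20 * r * q ^ 2 * √p := by
    intro u hu
    obtain ⟨i₀, hi₀⟩ := not_forall.mp (Finset.mem_filter.mp hu).2
    exact norm_sum_prod_pow_momentExponent_le hr hq hg hχ hp fun i hi h ↦ hi₀ ⟨i, hi, h⟩
  have hexpand : ((∑ x, ‖∑ b ∈ s, χ (x + b)‖ ^ (2 * r) : ℝ) : ℂ) =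
      ∑ u ∈ tuples, correlation u := by
    rw [Finset.sum_comm, Complex.ofReal_sum]
    exact Finset.sum_congr rfl fun x _ ↦
      norm_sum_pow_two_mul (fun b ↦ star_mulChar_apply hq.one_lt hχ (x + b)) s r
  calc ∑ x, ‖∑ b ∈ s, χ (x + b)‖ ^ (2 * r)
      = ‖∑ u ∈ tuples, correlation u‖ := by
        rw [← hexpand, Complex.norm_real, Real.norm_of_nonneg (by positivity)]
    _ ≤ ∑ u ∈ tuples.filter repeated, ‖correlation u‖ +
          ∑ u ∈ tuples.filter (¬ repeated ·), ‖correlation u‖ := by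
        rw [Finset.sum_filter_add_sum_filter_not]
        exact norm_sum_le _ _
    _ ≤ (tuples.filter repeated).card • (p : ℝ) +
          (tuples.filter (¬ repeated ·)).card • (20 * r * q ^ 2 * √p) :=
        add_le_add (Finset.sum_le_card_nsmul _ _ _ hrepeated)
          (Finset.sum_le_card_nsmul _ _ _ hisolated)
    _ ≤ (s.card : ℝ) ^ r * r ^ (2 * r) * p + s.card ^ (2 * r) * (20 * r * q ^ 2 * √p) := by
        rw [nsmul_eq_mul, nsmul_eq_mul]
        gcongr
        · exact_mod_cast hcard ▸ card_filter_forall_exists_ne_eq_le hcard.le s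
        · exact_mod_cast (Finset.card_filter_le _ _).trans_eq
            (by simp [tuples, Fintype.card_piFinset, two_mul])

end Moments

section ShortSums

lemma sum_Ioc_sub_two_mul_le_sum_Ioc_add {h : ℕ → ℝ} (hh : ∀ n, |h n| ≤ 1) (N k : ℕ) :
    ∑ n ∈ Finset.Ioc 0 N, h n - 2 * k ≤ ∑ n ∈ Finset.Ioc 0 N, h (n + k) := by
  have shift_one (f : ℕ → ℝ) :
      ∑ n ∈ Finset.Ioc 0 N, f (n + 1) = ∑ n ∈ Finset.Ioc 0 N, f n + f (N + 1) - f 1 := by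
    induction N with
    | zero => simp
    | succ N ih =>
      rw [Finset.sum_Ioc_succ_top N.zero_le, Finset.sum_Ioc_succ_top N.zero_le, ih]
      ring
  induction k with
  | zero => simp
  | succ k ih =>
    have hstep := shift_one fun n ↦ h (n + k)
    simp only [add_right_comm _ 1 k] at hstep
    simp only [← add_assoc, hstep, Nat.cast_add, Nat.cast_one]
    linarith [neg_le_of_abs_le (hh (N + k + 1)), le_of_abs_le (hh (0 + k + 1))]

lemma sum_le_card_filter_mul_add_card_mul {ι : Type*} {s : Finset ι} {w : ι → ℝ} {t M : ℝ}
    (ht : 0 ≤ t) (hw : ∀ i ∈ s, w i ≤ M) :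
    ∑ i ∈ s, w i ≤ Finset.card {i ∈ s | t ≤ w i} * M + s.card * t := by
  classical
  rw [← Finset.sum_filter_add_sum_filter_not s (t ≤ w ·)]
  refine add_le_add ?_ ?_
  · rw [← nsmul_eq_mul]
    exact Finset.sum_le_card_nsmul _ _ _ fun i hi ↦ hw i (Finset.mem_filter.mp hi).1
  · rw [← nsmul_eq_mul]
    refine (Finset.sum_le_card_nsmul _ _ t fun i hi ↦ ?_).trans ?_
    · exact (not_le.mp (Finset.mem_filter.mp hi).2).le
    · exact nsmul_le_nsmul_left ht (Finset.card_filter_le _ _)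

lemma natCast_injOn_Iio (p : ℕ) : Set.InjOn (Nat.cast : ℕ → ZMod p) (Set.Iio p) := by
  intro m hm n hn h
  rwa [ZMod.natCast_eq_natCast_iff', Nat.mod_eq_of_lt hm, Nat.mod_eq_of_lt hn] at h

variable {p : ℕ} [Fact p.Prime]

lemma natCast_ne_zero_of_lt {n : ℕ} (hn : 0 < n) (hnp : n < p) : (n : ZMod p) ≠ 0 := fun h ↦
  hn.ne' <| natCast_injOn_Iio p hnp (hn.trans hnp) (by simpa using h)

lemma injOn_natCast_div {A N : ℕ} (hAN : A * N < p) :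
    Set.InjOn (fun ω : ℕ × ℕ ↦ (ω.2 / ω.1 : ZMod p))
      {ω | ω.1.Prime ∧ ω.1 ≤ A ∧ 0 < ω.2 ∧ ω.2 ≤ N ∧ ¬ ω.1 ∣ ω.2} := by
  rintro ⟨a, n⟩ ⟨ha, haA, hn0, hnN, hdvd⟩ ⟨b, m⟩ ⟨hb, hbA, -, hmN, -⟩ h
  have hne {l : ℕ} (hl : l.Prime) (hlA : l ≤ A) : (l : ZMod p) ≠ 0 :=
    natCast_ne_zero_of_lt hl.pos <|
      (hlA.trans (Nat.le_mul_of_pos_right A (hn0.trans_le hnN))).trans_lt hAN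
  have hmul : b * n = a * m := by
    refine natCast_injOn_Iio p ((Nat.mul_le_mul hbA hnN).trans_lt hAN)
      ((Nat.mul_le_mul haA hmN).trans_lt hAN) ?_
    push_cast
    rw [mul_comm (b : ZMod p), mul_comm (a : ZMod p)]
    exact (div_eq_div_iff (hne ha haA) (hne hb hbA)).mp h
  obtain rfl : a = b := by
    refine (Nat.prime_dvd_prime_iff_eq ha hb).mp ?_
    exact (ha.dvd_mul.mp ⟨m, hmul⟩).resolve_right hdvd
  rw [Nat.eq_of_mul_eq_mul_left ha.pos hmul]

/-- The character sum over the interval of length `B` following `x`. -/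
noncomputable def shortSum (χ : MulChar (ZMod p) ℂ) (B : ℕ) (x : ZMod p) : ℂ :=
  ∑ b ∈ Finset.Ioc 0 B, χ (x + b)

variable {χ : MulChar (ZMod p) ℂ}

lemma norm_shortSum_le (B : ℕ) (x : ZMod p) : ‖shortSum χ B x‖ ≤ B :=
  (norm_sum_le_of_le _ fun _ _ ↦ DirichletCharacter.norm_le_one χ _).trans_eq (by simp)

lemma sum_norm_shortSum_pow_le {q g r B : ℕ} (hr : 1 ≤ r) (hq : q.Prime) (hg : q * g + 1 = p)
    (hχ : orderOf χ = q) (hp : 100 * r ^ 2 * q ^ 4 ≤ p) (hB : B < p) :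
    ∑ x, ‖shortSum χ B x‖ ^ (2 * r) ≤
      (B : ℝ) ^ r * r ^ (2 * r) * p + B ^ (2 * r) * (20 * r * q ^ 2 * √p) := by
  have hinj : Set.InjOn (Nat.cast : ℕ → ZMod p) (Finset.Ioc 0 B) :=
    (natCast_injOn_Iio p).mono fun b hb ↦ (Finset.mem_Ioc.mp hb).2.trans_lt hB
  have := sum_norm_sum_mulChar_pow_le hr hq hg hχ hp ((Finset.Ioc 0 B).image Nat.cast)
  simpa only [Finset.sum_image hinj, Finset.card_image_of_injOn hinj, Nat.card_Ioc,
    Nat.sub_zero, shortSum] using this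

lemma sum_re_mulChar_add_mul_le_norm_shortSum {a : ℕ} (ha : (a : ZMod p) ≠ 0) (n B : ℕ) :
    ∑ b ∈ Finset.Ioc 0 B, (χ (n + a * b : ℕ)).re ≤ ‖shortSum χ B (n / a)‖ := by
  have hfactor : ∑ b ∈ Finset.Ioc 0 B, χ (n + a * b : ℕ) = χ a * shortSum χ B (n / a) := by
    simp only [shortSum, Finset.mul_sum, ← map_mul, mul_add, mul_div_cancel₀ _ ha]
    push_cast
    rfl
  rw [← Complex.re_sum, hfactor]
  refine (Complex.re_le_norm _).trans ?_
  rw [norm_mul]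
  exact mul_le_of_le_one_left (norm_nonneg _) (DirichletCharacter.norm_le_one χ _)

lemma mul_le_sum_norm_shortSum {a N B : ℕ} {η : ℝ} (ha : (a : ZMod p) ≠ 0)
    (haB : 2 * ((a : ℝ) * B) ≤ η * N)
    (hsum : 2 * η * N ≤ ∑ n ∈ Finset.Ioc 0 N, (χ (n : ZMod p)).re) :
    B * (η * N) ≤ ∑ n ∈ Finset.Ioc 0 N, ‖shortSum χ B (n / a)‖ := by
  have hshift : ∀ b ∈ Finset.Ioc 0 B,
      η * N ≤ ∑ n ∈ Finset.Ioc 0 N, (χ (n + a * b : ℕ)).re := by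
    intro b hb
    have hab : ((a * b : ℕ) : ℝ) ≤ a * B := by
      exact_mod_cast Nat.mul_le_mul_left a (Finset.mem_Ioc.mp hb).2
    linarith [sum_Ioc_sub_two_mul_le_sum_Ioc_add
      (fun n ↦ (Complex.abs_re_le_norm _).trans (DirichletCharacter.norm_le_one χ n)) N (a * b)]
  calc B * (η * N) = (Finset.Ioc 0 B).card • (η * N) := by simp
    _ ≤ ∑ b ∈ Finset.Ioc 0 B, ∑ n ∈ Finset.Ioc 0 N, (χ (n + a * b : ℕ)).re :=
        Finset.card_nsmul_le_sum _ _ _ hshift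
    _ = ∑ n ∈ Finset.Ioc 0 N, ∑ b ∈ Finset.Ioc 0 B, (χ (n + a * b : ℕ)).re := Finset.sum_comm
    _ ≤ _ := Finset.sum_le_sum fun n _ ↦ sum_re_mulChar_add_mul_le_norm_shortSum ha n B

lemma card_filter_dvd_product_Ioc_le {s : Finset ℕ} {c : ℝ} (hs : ∀ a ∈ s, 1 ≤ c * a) (N : ℕ) :
    (Finset.card {ω ∈ s ×ˢ Finset.Ioc 0 N | ω.1 ∣ ω.2} : ℝ) ≤ c * (s.card * N) := by
  have hfiber (a : ℕ) (ha : a ∈ s) : (Finset.card {n ∈ Finset.Ioc 0 N | a ∣ n} : ℝ) ≤ c * N := by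
    have hac := hs a ha
    have ha0 : (0 : ℝ) < a := by
      rcases a.eq_zero_or_pos with rfl | h
      · norm_num at hac
      · exact_mod_cast h
    rw [Nat.Ioc_filter_dvd_card_eq_div]
    refine Nat.cast_div_le.trans ((div_le_iff₀ ha0).mpr ?_)
    nlinarith [(Nat.cast_nonneg N : (0 : ℝ) ≤ N)]
  calc (Finset.card {ω ∈ s ×ˢ Finset.Ioc 0 N | ω.1 ∣ ω.2} : ℝ)
      = ∑ a ∈ s, (Finset.card {n ∈ Finset.Ioc 0 N | a ∣ n} : ℝ) := by
        simp only [Finset.card_filter, Finset.sum_product]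
        push_cast
        rfl
    _ ≤ s.card • (c * N) := Finset.sum_le_card_nsmul _ _ _ hfiber
    _ = c * (s.card * N) := by rw [nsmul_eq_mul]; ring

lemma mul_le_card_filter_le_norm_shortSum {N B : ℕ} {η : ℝ} {s : Finset ℕ} (hη : 0 < η)
    (hB : 0 < B) (hs0 : ∀ a ∈ s, (a : ZMod p) ≠ 0) (hsη : ∀ a ∈ s, 4 ≤ η * a)
    (hsB : ∀ a ∈ s, 2 * ((a : ℝ) * B) ≤ η * N)
    (hsum : 2 * η * N ≤ ∑ n ∈ Finset.Ioc 0 N, (χ (n : ZMod p)).re) :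
    η / 4 * (s.card * N) ≤ Finset.card
      {ω ∈ s ×ˢ Finset.Ioc 0 N | ¬ ω.1 ∣ ω.2 ∧ η * B / 2 ≤ ‖shortSum χ B (ω.2 / ω.1)‖} := by
  set pairs := s ×ˢ Finset.Ioc 0 N
  have hpairs : (pairs.card : ℝ) = s.card * N := by simp [pairs]
  have hB' : (0 : ℝ) < B := by exact_mod_cast hB
  have hlower : s.card * (B * (η * N)) ≤ ∑ ω ∈ pairs, ‖shortSum χ B (ω.2 / ω.1)‖ := by
    rw [Finset.sum_product, ← nsmul_eq_mul]
    exact Finset.card_nsmul_le_sum _ _ _ fun a ha ↦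
      mul_le_sum_norm_shortSum (hs0 a ha) (hsB a ha) hsum
  have hupper := sum_le_card_filter_mul_add_card_mul (s := pairs) (t := η * B / 2)
    (by positivity) fun ω _ ↦ norm_shortSum_le (χ := χ) B (ω.2 / ω.1)
  have hlarge : η / 2 * (s.card * N) ≤
      Finset.card {ω ∈ pairs | η * B / 2 ≤ ‖shortSum χ B (ω.2 / ω.1)‖} := by
    rw [hpairs] at hupper
    refine le_of_mul_le_mul_right ?_ hB'
    linarith
  have hdvd : (Finset.card {ω ∈ pairs | ω.1 ∣ ω.2} : ℝ) ≤ η / 4 * (s.card * N) :=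
    card_filter_dvd_product_Ioc_le (fun a ha ↦ by linarith [hsη a ha]) N
  have hcover : Finset.card {ω ∈ pairs | η * B / 2 ≤ ‖shortSum χ B (ω.2 / ω.1)‖} ≤
      Finset.card {ω ∈ pairs | ω.1 ∣ ω.2} + Finset.card
        {ω ∈ pairs | ¬ ω.1 ∣ ω.2 ∧ η * B / 2 ≤ ‖shortSum χ B (ω.2 / ω.1)‖} := by
    refine (Finset.card_le_card fun ω hω ↦ ?_).trans (Finset.card_union_le _ _)
    simp only [Finset.mem_union, Finset.mem_filter] at hω ⊢
    tauto
  have hcover' := (Nat.cast_le (α := ℝ)).mpr hcover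
  push_cast at hcover'
  linarith

lemma mul_pow_le_sum_norm_shortSum_pow {A N B : ℕ} {η : ℝ} {s : Finset ℕ} (hη : 0 < η)
    (hB : 0 < B) (hAN : A * N < p) (hAB : 2 * ((A : ℝ) * B) ≤ η * N)
    (hs : ∀ a ∈ s, a.Prime ∧ a ≤ A ∧ 4 ≤ η * a)
    (hsum : 2 * η * N ≤ ∑ n ∈ Finset.Ioc 0 N, (χ (n : ZMod p)).re) (k : ℕ) :
    η / 4 * (s.card * N) * (η * B / 2) ^ k ≤ ∑ x, ‖shortSum χ B x‖ ^ k := by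
  classical
  rcases N.eq_zero_or_pos with rfl | hN
  · simpa using Finset.sum_nonneg fun x _ ↦ pow_nonneg (norm_nonneg (shortSum χ B x)) k
  set good := {ω ∈ s ×ˢ Finset.Ioc 0 N | ¬ ω.1 ∣ ω.2 ∧ η * B / 2 ≤ ‖shortSum χ B (ω.2 / ω.1)‖}
  have hs0 (a : ℕ) (ha : a ∈ s) : (a : ZMod p) ≠ 0 := by
    obtain ⟨hprime, haA, -⟩ := hs a ha
    exact natCast_ne_zero_of_lt hprime.pos
      ((haA.trans (Nat.le_mul_of_pos_right A hN)).trans_lt hAN)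
  have hcard : η / 4 * (s.card * N) ≤ good.card := by
    refine mul_le_card_filter_le_norm_shortSum hη hB hs0 (fun a ha ↦ (hs a ha).2.2)
      (fun a ha ↦ le_trans ?_ hAB) hsum
    gcongr
    exact (hs a ha).2.1
  have hinj : Set.InjOn (fun ω : ℕ × ℕ ↦ (ω.2 / ω.1 : ZMod p)) good := by
    refine (injOn_natCast_div hAN).mono fun ω hω ↦ ?_
    simp only [good, Finset.coe_filter, Finset.mem_product, Finset.mem_Ioc] at hω
    obtain ⟨⟨ha, hn⟩, hdvd, -⟩ := hω
    exact ⟨(hs _ ha).1, (hs _ ha).2.1, hn.1, hn.2, hdvd⟩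
  calc η / 4 * (s.card * N) * (η * B / 2) ^ k
      ≤ good.card * (η * B / 2) ^ k := by gcongr
    _ = ∑ ω ∈ good, (η * B / 2) ^ k := by rw [Finset.sum_const, nsmul_eq_mul]
    _ ≤ ∑ ω ∈ good, ‖shortSum χ B (ω.2 / ω.1)‖ ^ k := by
        gcongr with ω hω
        exact (Finset.mem_filter.mp hω).2.2
    _ = ∑ x ∈ good.image fun ω ↦ (ω.2 / ω.1 : ZMod p), ‖shortSum χ B x‖ ^ k :=
        (Finset.sum_image (f := fun x ↦ ‖shortSum χ B x‖ ^ k) hinj).symm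
    _ ≤ ∑ x, ‖shortSum χ B x‖ ^ k :=
        Finset.sum_le_sum_of_subset_of_nonneg (Finset.subset_univ _) fun x _ _ ↦ by positivity

theorem mul_card_mul_le_of_le_sum_re {q g r A N B : ℕ} {η : ℝ} {s : Finset ℕ} (hr : 1 ≤ r)
    (hq : q.Prime) (hg : q * g + 1 = p) (hχ : orderOf χ = q) (hp : 100 * r ^ 2 * q ^ 4 ≤ p)
    (hη : 0 < η) (hB : 0 < B) (hBp : B < p) (hpB : √p ≤ B ^ r) (hAN : A * N < p)
    (hAB : 2 * ((A : ℝ) * B) ≤ η * N) (hs : ∀ a ∈ s, a.Prime ∧ a ≤ A ∧ 4 ≤ η * a)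
    (hsum : 2 * η * N ≤ ∑ n ∈ Finset.Ioc 0 N, (χ (n : ZMod p)).re) :
    η / 4 * (η / 2) ^ (2 * r) * (s.card * N) ≤ (r ^ (2 * r) + 20 * r) * q ^ 2 * √p := by
  have hB' : (0 : ℝ) < B ^ (2 * r) := by positivity
  have hq1 : (1 : ℝ) ≤ q ^ 2 := one_le_pow₀ (by exact_mod_cast hq.one_le)
  refine le_of_mul_le_mul_right ?_ hB'
  calc η / 4 * (η / 2) ^ (2 * r) * (s.card * N) * B ^ (2 * r)
      = η / 4 * (s.card * N) * (η * B / 2) ^ (2 * r) := by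
        rw [mul_div_right_comm, mul_pow]; ring
    _ ≤ ∑ x, ‖shortSum χ B x‖ ^ (2 * r) :=
        mul_pow_le_sum_norm_shortSum_pow hη hB hAN hAB hs hsum (2 * r)
    _ ≤ B ^ r * r ^ (2 * r) * p + B ^ (2 * r) * (20 * r * q ^ 2 * √p) :=
        sum_norm_shortSum_pow_le hr hq hg hχ hp hBp
    _ = B ^ r * r ^ (2 * r) * (1 * √p * √p) + B ^ (2 * r) * (20 * r * q ^ 2 * √p) := by
        rw [one_mul, Real.mul_self_sqrt p.cast_nonneg]
    _ ≤ B ^ r * r ^ (2 * r) * (q ^ 2 * √p * B ^ r) + B ^ (2 * r) * (20 * r * q ^ 2 * √p) := by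
        gcongr
    _ = (r ^ (2 * r) + 20 * r) * q ^ 2 * √p * B ^ (2 * r) := by ring

end ShortSums

section Mertens

open Filter Topology
open scoped Nat

lemma log_factorial_eq_sum_factorization (n : ℕ) :
    Real.log (n ! : ℕ) =
      ∑ l ∈ Finset.Ioc 0 n with l.Prime, ((n !).factorization l : ℝ) * Real.log l := by
  rw [Real.log_nat_eq_sum_factorization, Finsupp.sum]
  refine Finset.sum_subset (fun l hl ↦ ?_) fun l _ hl ↦ ?_
  · rw [Nat.support_factorization, Nat.mem_primeFactors] at hl
    exact Finset.mem_filter.mpr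
      ⟨Finset.mem_Ioc.mpr ⟨hl.1.pos, hl.1.dvd_factorial.mp hl.2.1⟩, hl.1⟩
  · simp [Finsupp.notMem_support_iff.mp hl]

lemma div_sub_one_le_factorization_factorial {l : ℕ} (hl : l.Prime) (n : ℕ) :
    (n / l - 1 : ℝ) ≤ (n !).factorization l := by
  have hfactorization : n / l ≤ (n !).factorization l := by
    rw [Nat.factorization_factorial hl (Nat.lt_add_of_pos_right (Nat.succ_pos 1))]
    simpa using Finset.single_le_sum (f := fun i ↦ n / l ^ i) (fun _ _ ↦ Nat.zero_le _)
      (Finset.mem_Ico.mpr (⟨le_rfl, by lia⟩ : 1 ≤ 1 ∧ 1 < Nat.log l n + 2))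
  have hfloor := (Nat.sub_one_lt_floor (n / l : ℝ)).le
  rw [Nat.floor_div_eq_div] at hfloor
  exact hfloor.trans (by exact_mod_cast hfactorization)

lemma sum_log_div_le {n : ℕ} (hn : 0 < n) :
    ∑ l ∈ Finset.Ioc 0 n with l.Prime, Real.log l / l ≤ Real.log n + Real.log 4 := by
  have hn' : (0 : ℝ) < n := by exact_mod_cast hn
  have hfactorial : Real.log (n ! : ℕ) ≤ n * Real.log n := by
    rw [← Real.log_pow]
    exact Real.log_le_log (by exact_mod_cast n.factorial_pos) (by exact_mod_cast n.factorial_le_pow)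
  have htheta := Chebyshev.theta_le_log4_mul_x hn'.le
  rw [Chebyshev.theta, Nat.floor_natCast] at htheta
  have hlower : n * ∑ l ∈ Finset.Ioc 0 n with l.Prime, Real.log l / l -
      ∑ l ∈ Finset.Ioc 0 n with l.Prime, Real.log l ≤ Real.log (n ! : ℕ) := by
    rw [log_factorial_eq_sum_factorization, Finset.mul_sum, ← Finset.sum_sub_distrib]
    gcongr with l hl
    calc n * (Real.log l / l) - Real.log l = (n / l - 1) * Real.log l := by ring
      _ ≤ (n !).factorization l * Real.log l := by
          gcongr
          exact div_sub_one_le_factorization_factorial (Finset.mem_filter.mp hl).2 n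
  refine le_of_mul_le_mul_left ?_ hn'
  linarith

lemma log_div_mul_sub_one_le {x : ℝ} (hx : 2 ≤ x) :
    Real.log x / (x * (x - 1)) ≤ 4 * x ^ (-(3 / 2) : ℝ) := by
  have hx0 : 0 < x := by linarith
  have hlog : Real.log x ≤ 2 * x ^ (1 / 2 : ℝ) :=
    (Real.log_le_rpow_div hx0.le (ε := 1 / 2) (by norm_num)).trans_eq (by ring)
  calc Real.log x / (x * (x - 1)) ≤ 2 * x ^ (1 / 2 : ℝ) / (x * (x / 2)) := by
        gcongr
        linarith
    _ = 4 * (x ^ (1 / 2 : ℝ) / x ^ (2 : ℝ)) := by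
        rw [Real.rpow_two]
        field_simp
        norm_num1
    _ = 4 * x ^ (-(3 / 2) : ℝ) := by
        rw [← Real.rpow_sub hx0]
        norm_num

lemma factorization_factorial_mul_log_le {l : ℕ} (hl : l.Prime) (n : ℕ) :
    (n !).factorization l * Real.log l ≤
      n * (Real.log l / l) + n * (4 * (l : ℝ) ^ (-(3 / 2) : ℝ)) := by
  have hl2 : (2 : ℝ) ≤ l := by exact_mod_cast hl.two_le
  have hfactorization : ((n !).factorization l : ℝ) ≤ n / (l - 1) := by
    refine (Nat.cast_le.mpr (Nat.factorization_factorial_le_div_pred hl n)).trans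
      (Nat.cast_div_le.trans_eq ?_)
    rw [Nat.cast_sub hl.one_le, Nat.cast_one]
  calc (n !).factorization l * Real.log l ≤ n / (l - 1) * Real.log l := by
        gcongr
    _ = n * (Real.log l / l) + n * (Real.log l / (l * (l - 1))) := by
        have : (l - 1 : ℝ) ≠ 0 := by linarith
        field_simp
        ring
    _ ≤ _ := by
        gcongr
        exact log_div_mul_sub_one_le hl2

lemma exists_log_sub_le_sum_log_div : ∃ C : ℝ, 0 ≤ C ∧ ∀ n : ℕ, 0 < n →
    Real.log n - C ≤ ∑ l ∈ Finset.Ioc 0 n with l.Prime, Real.log l / l := by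
  have hsummable : Summable fun l : ℕ ↦ 4 * (l : ℝ) ^ (-(3 / 2) : ℝ) :=
    (Real.summable_nat_rpow.mpr (by norm_num)).mul_left 4
  refine ⟨1 + ∑' l : ℕ, 4 * (l : ℝ) ^ (-(3 / 2) : ℝ), by positivity, fun n hn ↦ ?_⟩
  have hn' : (0 : ℝ) < n := by exact_mod_cast hn
  have hfactorial : n * Real.log n - n ≤ Real.log (n ! : ℕ) := by
    have hpi : 0 ≤ Real.log (2 * Real.pi) := Real.log_nonneg (by linarith [Real.pi_gt_three])
    linarith [Stirling.le_log_factorial_stirling hn.ne', Real.log_natCast_nonneg n]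
  have hupper : Real.log (n ! : ℕ) ≤ n * ∑ l ∈ Finset.Ioc 0 n with l.Prime, Real.log l / l +
      n * ∑' l : ℕ, 4 * (l : ℝ) ^ (-(3 / 2) : ℝ) := by
    rw [log_factorial_eq_sum_factorization]
    refine (Finset.sum_le_sum fun l hl ↦
      factorization_factorial_mul_log_le (Finset.mem_filter.mp hl).2 n).trans ?_
    rw [Finset.sum_add_distrib, ← Finset.mul_sum, ← Finset.mul_sum]
    gcongr
    exact hsummable.sum_le_tsum _ fun _ _ ↦ by positivity
  refine le_of_mul_le_mul_left ?_ hn'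
  linarith

lemma exists_sum_Ioc_log_div_le : ∃ C : ℝ, 0 ≤ C ∧ ∀ x y : ℝ, 1 ≤ x → x ≤ y →
    ∑ l ∈ Finset.Ioc ⌊x⌋₊ ⌊y⌋₊ with l.Prime, Real.log l / l ≤ Real.log y - Real.log x + C := by
  obtain ⟨C, hC0, hC⟩ := exists_log_sub_le_sum_log_div
  refine ⟨C + Real.log 2 + Real.log 4, by positivity, fun x y hx hxy ↦ ?_⟩
  have hfx : 0 < ⌊x⌋₊ := Nat.floor_pos.mpr hx
  have hfy : 0 < ⌊y⌋₊ := Nat.floor_pos.mpr (hx.trans hxy)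
  have hlogx : Real.log x ≤ Real.log ⌊x⌋₊ + Real.log 2 := by
    have hfx' : (1 : ℝ) ≤ ⌊x⌋₊ := by exact_mod_cast hfx
    rw [← Real.log_mul (by positivity) two_ne_zero]
    exact Real.log_le_log (by positivity) (by linarith [Nat.lt_floor_add_one x])
  have hlogy : Real.log ⌊y⌋₊ ≤ Real.log y :=
    Real.log_le_log (by exact_mod_cast hfy) (Nat.floor_le (by linarith))
  have hsplit := Finset.sum_Ioc_consecutive (fun l : ℕ ↦ if l.Prime then Real.log l / l else 0)
    (Nat.zero_le _) (Nat.floor_mono hxy)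
  simp only [← Finset.sum_filter] at hsplit
  linarith [hC _ hfx, sum_log_div_le hfy]

/-- The sum of the reciprocals of the primes `l` with `x < l ≤ y`, for `0 ≤ x`. -/
noncomputable def primeReciprocalSum (x y : ℝ) : ℝ :=
  ∑ l ∈ Finset.Ioc ⌊x⌋₊ ⌊y⌋₊ with l.Prime, (1 / l : ℝ)

lemma primeReciprocalSum_add {x y z : ℝ} (hxy : x ≤ y) (hyz : y ≤ z) :
    primeReciprocalSum x y + primeReciprocalSum y z = primeReciprocalSum x z := by
  simp only [primeReciprocalSum, Finset.sum_filter]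
  exact Finset.sum_Ioc_consecutive _ (Nat.floor_mono hxy) (Nat.floor_mono hyz)

lemma exists_primeReciprocalSum_rpow_le : ∃ C : ℝ, 0 ≤ C ∧ ∀ x ρ : ℝ, 1 < x → 1 ≤ ρ →
    primeReciprocalSum x (x ^ ρ) ≤ ρ - 1 + C / Real.log x := by
  obtain ⟨C, hC0, hC⟩ := exists_sum_Ioc_log_div_le
  refine ⟨C, hC0, fun x ρ hx hρ ↦ ?_⟩
  have hx0 : 0 < x := by linarith
  have hlog : 0 < Real.log x := Real.log_pos hx
  refine le_of_mul_le_mul_right ?_ hlog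
  calc primeReciprocalSum x (x ^ ρ) * Real.log x
      ≤ ∑ l ∈ Finset.Ioc ⌊x⌋₊ ⌊x ^ ρ⌋₊ with l.Prime, Real.log l / l := by
        rw [primeReciprocalSum, Finset.sum_mul]
        refine Finset.sum_le_sum fun l hl ↦ ?_
        have hxl : x < l :=
          (Nat.floor_lt hx0.le).mp (Finset.mem_Ioc.mp (Finset.mem_filter.mp hl).1).1
        rw [one_div_mul_eq_div]
        gcongr
    _ ≤ Real.log (x ^ ρ) - Real.log x + C := hC x _ hx.le (Real.self_le_rpow_of_one_le hx.le hρ)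
    _ = (ρ - 1 + C / Real.log x) * Real.log x := by
        rw [Real.log_rpow hx0]
        field_simp

lemma exists_primeReciprocalSum_rpow_pow_le : ∃ C : ℝ, 0 ≤ C ∧ ∀ x ρ : ℝ, 1 < x → 1 ≤ ρ →
    ∀ K : ℕ, primeReciprocalSum x (x ^ ρ ^ K) ≤ K * (ρ - 1 + C / Real.log x) := by
  obtain ⟨C, hC0, hC⟩ := exists_primeReciprocalSum_rpow_le
  refine ⟨C, hC0, fun x ρ hx hρ K ↦ ?_⟩
  have hx0 : 0 < x := by linarith
  have hlog : 0 < Real.log x := Real.log_pos hx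
  induction K with
  | zero => simp [primeReciprocalSum]
  | succ K ih =>
    have hρK : 1 ≤ ρ ^ K := one_le_pow₀ hρ
    have hxK : x ≤ x ^ ρ ^ K := Real.self_le_rpow_of_one_le hx.le hρK
    have hpow : (x ^ ρ ^ K) ^ ρ = x ^ ρ ^ (K + 1) := by rw [← Real.rpow_mul hx0.le, pow_succ]
    have hstep := hC (x ^ ρ ^ K) ρ (hx.trans_le hxK) hρ
    have herror : C / Real.log (x ^ ρ ^ K) ≤ C / Real.log x := by gcongr
    rw [← primeReciprocalSum_add hxK (hpow ▸ Real.self_le_rpow_of_one_le (hx.le.trans hxK) hρ),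
      ← hpow]
    push_cast
    linarith

-- Splitting `(x, x ^ c]` into `K` pieces bounds the sum by `K (c ^ (1 / K) - 1) + o(1)`, and the
-- main term tends to `log c` as `K → ∞`.
theorem eventually_primeReciprocalSum_rpow_le {c η : ℝ} (hc : 1 ≤ c) (hη : 0 < η) :
    ∀ᶠ x in atTop, primeReciprocalSum x (x ^ c) ≤ Real.log c + η := by
  obtain ⟨C, -, hC⟩ := exists_primeReciprocalSum_rpow_pow_le
  have hlim : Tendsto (fun K : ℕ ↦ (K : ℝ) * (c ^ (K : ℝ)⁻¹ - 1)) atTop (𝓝 (Real.log c)) := by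
    have hinv : Tendsto (fun K : ℕ ↦ (K : ℝ)⁻¹) atTop (𝓝[>] 0) :=
      tendsto_inv_atTop_nhdsGT_zero.comp tendsto_natCast_atTop_atTop
    simpa [Function.comp_def] using (tendsto_rpow_sub_one_log (by linarith)).comp hinv
  obtain ⟨K, hK, hK0⟩ := ((hlim.eventually_lt_const (lt_add_of_pos_right _ (half_pos hη))).and
    (eventually_ne_atTop 0)).exists
  set ρ := c ^ (K : ℝ)⁻¹
  have hρ : 1 ≤ ρ := Real.one_le_rpow hc (by positivity)
  have hρK : ρ ^ K = c := Real.rpow_inv_natCast_pow (by linarith) hK0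
  have herror : Tendsto (fun x ↦ K * (C / Real.log x)) atTop (𝓝 0) := by
    simpa using (Real.tendsto_log_atTop.const_div_atTop C).const_mul (K : ℝ)
  filter_upwards [herror.eventually_lt_const (half_pos hη), eventually_gt_atTop 1] with x hx hx1
  have := hC x ρ hx1 hρ K
  rw [hρK] at this
  linarith

end Mertens

section Vinogradov

lemma map_eq_one_of_forall_prime_dvd {M : Type*} [Monoid M] {f : ℕ →* M} {n : ℕ} (hn : n ≠ 0)
    (hf : ∀ l : ℕ, l.Prime → l ∣ n → f l = 1) : f n = 1 := by
  rw [← Nat.prod_primeFactorsList hn, map_list_prod]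
  refine List.prod_eq_one fun z hz ↦ ?_
  obtain ⟨l, hl, rfl⟩ := List.mem_map.mp hz
  exact hf l (Nat.prime_of_mem_primeFactorsList hl) (Nat.dvd_of_mem_primeFactorsList hl)

-- Only the multiples of the primes in `(y, N]` can contribute less than `1` to the sum.
theorem mul_one_sub_primeReciprocalSum_le_sum_re {f : ℕ →* ℂ} (hf : ∀ n, ‖f n‖ ≤ 1) {y : ℝ}
    (hy : 0 ≤ y) (hfy : ∀ l : ℕ, l.Prime → l ≤ y → f l = 1) (N : ℕ) :
    N * (1 - 2 * primeReciprocalSum y N) ≤ ∑ n ∈ Finset.Ioc 0 N, (f n).re := by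
  set D := {l ∈ Finset.Ioc ⌊y⌋₊ N | l.Prime}
  have hterm : ∀ n ∈ Finset.Ioc 0 N, 1 - 2 * ∑ l ∈ D, (if l ∣ n then 1 else 0 : ℝ) ≤ (f n).re := by
    intro n hn
    obtain ⟨hn0, hnN⟩ := Finset.mem_Ioc.mp hn
    by_cases hex : ∃ l ∈ D, l ∣ n
    · obtain ⟨l, hl, hd⟩ := hex
      have hone : (1 : ℝ) ≤ ∑ l ∈ D, (if l ∣ n then 1 else 0 : ℝ) := by
        simpa [hd] using Finset.single_le_sum (f := fun l ↦ (if l ∣ n then 1 else 0 : ℝ))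
          (fun _ _ ↦ by positivity) hl
      linarith [neg_le_of_abs_le ((Complex.abs_re_le_norm (f n)).trans (hf n))]
    · have hfn : f n = 1 := map_eq_one_of_forall_prime_dvd hn0.ne' fun l hl hd ↦ by
        refine hfy l hl <| not_lt.mp fun hlt ↦ hex ⟨l, ?_, hd⟩
        simp [D, hl, (Nat.floor_lt hy).mpr hlt, (Nat.le_of_dvd hn0 hd).trans hnN]
      have : 0 ≤ ∑ l ∈ D, (if l ∣ n then 1 else 0 : ℝ) := by positivity
      rw [hfn, Complex.one_re]
      linarith
  have hcount : ∑ n ∈ Finset.Ioc 0 N, ∑ l ∈ D, (if l ∣ n then 1 else 0 : ℝ) ≤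
      N * primeReciprocalSum y N := by
    rw [Finset.sum_comm, primeReciprocalSum, Nat.floor_natCast, Finset.mul_sum]
    refine Finset.sum_le_sum fun l _ ↦ ?_
    rw [Finset.sum_boole, Nat.Ioc_filter_dvd_card_eq_div, mul_one_div]
    exact Nat.cast_div_le
  calc N * (1 - 2 * primeReciprocalSum y N)
      ≤ N - 2 * ∑ n ∈ Finset.Ioc 0 N, ∑ l ∈ D, (if l ∣ n then 1 else 0 : ℝ) := by linarith
    _ = ∑ n ∈ Finset.Ioc 0 N, (1 - 2 * ∑ l ∈ D, (if l ∣ n then 1 else 0 : ℝ)) := by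
        simp [Finset.sum_sub_distrib, Finset.mul_sum]
    _ ≤ _ := Finset.sum_le_sum hterm

end Vinogradov

section PrimeCounting

open Filter
open scoped Nat Nat.Prime

lemma eventually_mul_rpow_le_rpow (C : ℝ) {a b : ℝ} (hab : a < b) :
    ∀ᶠ x : ℝ in atTop, C * x ^ a ≤ x ^ b := by
  filter_upwards [(tendsto_rpow_atTop (sub_pos.mpr hab)).eventually_ge_atTop C,
    eventually_gt_atTop 0] with x hC hx
  calc C * x ^ a ≤ x ^ (b - a) * x ^ a := by gcongr
    _ = x ^ b := by rw [← Real.rpow_add hx, sub_add_cancel]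

lemma eventually_rpow_add_le_primeCounting {a : ℝ} (ha : 0 < a) (ha1 : a < 1) (c : ℝ) :
    ∀ᶠ x : ℝ in atTop, x ^ a + c ≤ π ⌊x⌋₊ := by
  filter_upwards [(isLittleO_log_rpow_atTop (sub_pos.mpr ha1)).bound
      (by norm_num : (0 : ℝ) < 1 / 8), (tendsto_rpow_atTop ha).eventually_ge_atTop c,
    eventually_ge_atTop 5] with x hlog hc hx
  have hx0 : 0 < x := by linarith
  have hlog0 : 0 < Real.log x := Real.log_pos (by linarith)
  rw [Real.norm_of_nonneg hlog0.le, Real.norm_of_nonneg (by positivity)] at hlog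
  have hxa : x ^ a * x ^ (1 - a) = x := by rw [← Real.rpow_add hx0]; simp
  have hlogx : Real.log x ≤ 1 / 8 * x :=
    hlog.trans <| mul_le_mul_of_nonneg_left
      (Real.rpow_le_self_of_one_le (by linarith) (by linarith)) (by norm_num)
  have hlog2 : Real.log (x + 2) ≤ Real.log 2 + Real.log x := by
    rw [← Real.log_mul two_ne_zero hx0.ne']
    exact Real.log_le_log (by linarith) (by linarith)
  have hnum : 2 * x ^ a * Real.log x ≤ (x - 1) * Real.log 2 - Real.log (x + 2) := by
    have hmul := mul_le_mul_of_nonneg_left hlog (by positivity : 0 ≤ x ^ a)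
    nlinarith [Real.log_two_gt_d9, Real.log_two_lt_d9]
  linarith [(le_div_iff₀ hlog0).mpr hnum, Chebyshev.pi_ge' (by linarith : 1 < x)]

/-- Products of `k` distinct primes `≤ n` are distinct roots of `X ^ g - 1`. -/
lemma choose_primeCounting_le_of_pow_eq_one {p g n k : ℕ} [Fact p.Prime] (hg : 0 < g)
    (hn : n ^ k < p) (h : ∀ l : ℕ, l.Prime → l ≤ n → (l : ZMod p) ^ g = 1) :
    (π n).choose k ≤ g := by
  have hprod {s : Finset ℕ} (hs : s ∈ n.primesLE.powersetCard k) : ∏ l ∈ s, l < p := by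
    rw [Finset.mem_powersetCard] at hs
    refine lt_of_le_of_lt ?_ hn
    rw [← hs.2]
    exact Finset.prod_le_pow_card _ _ _ fun l hl ↦ Nat.le_of_mem_primesLE (hs.1 hl)
  have hprime {s : Finset ℕ} (hs : s ∈ n.primesLE.powersetCard k) {l : ℕ} (hl : l ∈ s) :
      l.Prime := Nat.prime_of_mem_primesLE ((Finset.mem_powersetCard.mp hs).1 hl)
  calc (π n).choose k = (n.primesLE.powersetCard k).card := by
        rw [Finset.card_powersetCard, Nat.primesLE_card_eq_primeCounting]
    _ ≤ (Polynomial.nthRoots g (1 : ZMod p)).toFinset.card := by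
        refine Finset.card_le_card_of_injOn (fun s ↦ ((∏ l ∈ s, l : ℕ) : ZMod p))
          (fun s hs ↦ ?_) fun s hs t ht hst ↦ ?_
        · simp only [Finset.mem_coe, Multiset.mem_toFinset, Polynomial.mem_nthRoots hg,
            Nat.cast_prod, ← Finset.prod_pow]
          exact Finset.prod_eq_one fun l hl ↦ h l (hprime hs hl) <|
            Nat.le_of_mem_primesLE ((Finset.mem_powersetCard.mp hs).1 hl)
        · rw [← Nat.primeFactors_prod fun l hl ↦ hprime hs hl,
            ← Nat.primeFactors_prod fun l hl ↦ hprime ht hl,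
            natCast_injOn_Iio p (hprod hs) (hprod ht) hst]
    _ ≤ g := (Multiset.toFinset_card_le _).trans (Polynomial.card_nthRoots g 1)

lemma eventually_rpow_le_factorial_mul_of_pow_eq_one {k : ℕ} (hk : 2 ≤ k) {a : ℝ}
    (ha : 0 < a) (ha1 : a < 1) : ∀ᶠ p : ℕ in atTop, p.Prime → ∀ g : ℕ, 0 < g →
      (∀ l : ℕ, l.Prime → l ≤ (p : ℝ) ^ (1 / k : ℝ) → (l : ZMod p) ^ g = 1) →
      (p : ℝ) ^ a ≤ k ! * g := by
  have hk0 : (k : ℝ) ≠ 0 := by positivity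
  have hroot : Tendsto (fun p : ℕ ↦ (p : ℝ) ^ (1 / k : ℝ)) atTop atTop :=
    (tendsto_rpow_atTop (by positivity)).comp tendsto_natCast_atTop_atTop
  filter_upwards [hroot.eventually (eventually_rpow_add_le_primeCounting ha ha1 k)]
    with p hpi hp g hg h
  have : Fact p.Prime := ⟨hp⟩
  set n := ⌊(p : ℝ) ^ (1 / k : ℝ)⌋₊
  have hnp : (n : ℝ) ≤ (p : ℝ) ^ (1 / k : ℝ) := Nat.floor_le (by positivity)
  have hnk : n ^ k < p := by
    refine lt_of_le_of_ne ?_ fun h ↦ Nat.Prime.not_prime_pow hk (h ▸ hp)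
    have : (n : ℝ) ^ k ≤ p := (pow_le_pow_left₀ n.cast_nonneg hnp k).trans_eq <| by
      rw [one_div, Real.rpow_inv_natCast_pow p.cast_nonneg (by lia)]
    exact_mod_cast this
  have hle_sub : ((p : ℝ) ^ (1 / k : ℝ)) ^ a ≤ (π n + 1 - k : ℕ) := by
    have hcast : (π n : ℝ) ≤ (π n + 1 - k : ℕ) + k := by norm_cast; lia
    linarith
  calc (p : ℝ) ^ a = (((p : ℝ) ^ (1 / k : ℝ)) ^ a) ^ k := by
        rw [← Real.rpow_natCast, ← Real.rpow_mul (by positivity), mul_comm a,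
          ← Real.rpow_mul (by positivity), one_div, inv_mul_cancel_left₀ hk0]
    _ ≤ ((π n + 1 - k : ℕ) : ℝ) ^ k := by gcongr
    _ ≤ k ! * (π n).choose k := by
        exact (div_le_iff₀' (by positivity)).mp (Nat.pow_le_choose k (π n))
    _ ≤ k ! * g := by
        gcongr
        exact choose_primeCounting_le_of_pow_eq_one hg hnk fun l hl hln ↦
          h l hl ((Nat.cast_le.mpr hln).trans hnp)

lemma eventually_index_le_rpow_of_pow_eq_one {k : ℕ} (hk : 2 ≤ k) {δ : ℝ} (hδ : 0 < δ)
    (hδ2 : δ < 2) : ∀ᶠ p : ℕ in atTop, p.Prime → ∀ q g : ℕ, q * g + 1 = p →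
      (∀ l : ℕ, l.Prime → l ≤ (p : ℝ) ^ (1 / k : ℝ) → (l : ZMod p) ^ g = 1) →
      (q : ℝ) ≤ (p : ℝ) ^ δ := by
  filter_upwards [eventually_rpow_le_factorial_mul_of_pow_eq_one hk
      (sub_pos.mpr (by linarith : δ / 2 < 1)) (sub_lt_self 1 (half_pos hδ)),
    tendsto_natCast_atTop_atTop.eventually
      (eventually_mul_rpow_le_rpow (k !) (half_lt_self hδ))] with p hpg hpδ hp q g hqg h
  have hp0 : (0 : ℝ) < p := by exact_mod_cast hp.pos
  have hg : 0 < g := Nat.pos_of_ne_zero <| by rintro rfl; exact hp.one_lt.ne hqg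
  have hqgp : (q : ℝ) * g ≤ p := by exact_mod_cast (Nat.le_succ _).trans_eq hqg
  refine (le_of_mul_le_mul_right ?_ (by positivity : (0 : ℝ) < (p : ℝ) ^ (1 - δ / 2))).trans hpδ
  calc q * (p : ℝ) ^ (1 - δ / 2) ≤ q * (k ! * g) := by
        gcongr
        exact hpg hp g hg h
    _ = k ! * (q * g) := by ring
    _ ≤ k ! * p := by gcongr
    _ = k ! * (p : ℝ) ^ (δ / 2) * (p : ℝ) ^ (1 - δ / 2) := by
        rw [mul_assoc, ← Real.rpow_add hp0, add_sub_cancel, Real.rpow_one]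

end PrimeCounting

section Burgess

open Filter
open scoped Nat.Prime

lemma eventually_mul_rpow_le_floor_rpow (C : ℝ) {a b : ℝ} (hb : 0 < b) (hab : a < b) :
    ∀ᶠ x : ℝ in atTop, C * x ^ a ≤ ⌊x ^ b⌋₊ := by
  filter_upwards [eventually_mul_rpow_le_rpow (2 * C) hab,
    (tendsto_rpow_atTop hb).eventually_ge_atTop 2] with x hC hx
  linarith [Nat.lt_floor_add_one (x ^ b)]

lemma eventually_rpow_le_card_primes {a η : ℝ} (ha : 0 < a) (ha1 : a < 1) (hη : 0 < η) :
    ∀ᶠ x : ℝ in atTop,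
      x ^ a ≤ ((⌊x⌋₊.primesLE.filter fun l : ℕ ↦ 4 ≤ η * l).card : ℝ) := by
  filter_upwards [eventually_rpow_add_le_primeCounting ha ha1 ⌈4 / η⌉₊] with x hx
  have hsmall : (⌊x⌋₊.primesLE.filter fun l : ℕ ↦ ¬ 4 ≤ η * l).card ≤ ⌈4 / η⌉₊ := by
    refine (Finset.card_le_card fun l hl ↦ ?_).trans_eq (Finset.card_range _)
    rw [Finset.mem_range, Nat.lt_ceil, lt_div_iff₀' hη]
    exact not_le.mp (Finset.mem_filter.mp hl).2
  have hcard : (π ⌊x⌋₊ : ℝ) ≤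
      (⌊x⌋₊.primesLE.filter fun l : ℕ ↦ 4 ≤ η * l).card + ⌈4 / η⌉₊ := by
    rw [← Nat.primesLE_card_eq_primeCounting,
      ← Finset.card_filter_add_card_filter_not (s := ⌊x⌋₊.primesLE) fun l : ℕ ↦ 4 ≤ η * l]
    exact_mod_cast Nat.add_le_add_left hsmall _
  linarith

lemma eventually_exists_shift_lengths {β δ η : ℝ} (hβ : 0 < β) (hβδ : 8 * β ≤ δ)
    (hδ : δ < 1 / 4) (hη : 0 < η) :
    ∀ᶠ x : ℝ in atTop, ∃ A B : ℕ, x ^ (1 / 4 + δ - 2 * β) ≤ A ∧ x ^ β ≤ B ∧ B < x ∧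
      A * ⌊x ^ (1 / 4 + δ)⌋₊ < x ∧ 2 * ((A : ℝ) * B) ≤ η * ⌊x ^ (1 / 4 + δ)⌋₊ := by
  filter_upwards [eventually_mul_rpow_le_floor_rpow (8 / η) (by linarith : 0 < 1 / 4 + δ)
      (by linarith : 1 / 4 + δ - β < 1 / 4 + δ),
    eventually_mul_rpow_le_rpow 3 (by linarith : β < 1),
    eventually_mul_rpow_le_rpow η (by linarith : 1 / 2 + 2 * δ < 1),
    eventually_ge_atTop 1] with x hN hβx hηx hx
  set N := ⌊x ^ (1 / 4 + δ)⌋₊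
  set B := ⌊x ^ β⌋₊ + 1
  set A := ⌊η * N / (2 * B)⌋₊
  have hx0 : 0 < x := by linarith
  have hxβ : 1 ≤ x ^ β := Real.one_le_rpow hx hβ.le
  have hxB : x ^ β ≤ B := by simpa [B] using (Nat.lt_floor_add_one (x ^ β)).le
  have hBx : (B : ℝ) ≤ 2 * x ^ β := by
    push_cast [B]
    linarith [Nat.floor_le (zero_le_one.trans hxβ)]
  have hB : (0 : ℝ) < B := by linarith
  rw [Real.rpow_one] at hβx hηx
  have hAB : 2 * ((A : ℝ) * B) ≤ η * N := by
    have := (le_div_iff₀ (by positivity)).mp (Nat.floor_le (by positivity : 0 ≤ η * N / (2 * B)))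
    linarith
  refine ⟨A, B, ?_, hxB, by linarith, ?_, hAB⟩
  · have hlarge : 2 * x ^ (1 / 4 + δ - 2 * β) ≤ η * N / (2 * B) := by
      rw [le_div_iff₀ (by positivity)]
      calc 2 * x ^ (1 / 4 + δ - 2 * β) * (2 * B)
          ≤ 2 * x ^ (1 / 4 + δ - 2 * β) * (2 * (2 * x ^ β)) := by gcongr
        _ = 8 * x ^ (1 / 4 + δ - β) := by
          rw [show 1 / 4 + δ - β = 1 / 4 + δ - 2 * β + β by ring, Real.rpow_add hx0]
          ring
        _ ≤ η * N := by rwa [div_mul_eq_mul_div, div_le_iff₀' hη] at hN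
    linarith [Nat.lt_floor_add_one (η * N / (2 * B)),
      Real.one_le_rpow hx (by linarith : 0 ≤ 1 / 4 + δ - 2 * β)]
  · have hNN : (N : ℝ) * N ≤ x ^ (1 / 2 + 2 * δ) := by
      have hNx : (N : ℝ) ≤ x ^ (1 / 4 + δ) := Nat.floor_le (by positivity)
      refine (mul_self_le_mul_self N.cast_nonneg hNx).trans_eq ?_
      rw [← Real.rpow_add hx0]
      ring_nf
    have h2A : 2 * (A : ℝ) ≤ η * N := by
      linarith [le_mul_of_one_le_right A.cast_nonneg (by linarith : (1 : ℝ) ≤ B)]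
    linarith [mul_le_mul_of_nonneg_right h2A N.cast_nonneg, mul_le_mul_of_nonneg_left hNN hη.le]

lemma eventually_exists_shifts {β δ η : ℝ} (hβ : 0 < β) (hβδ : 8 * β ≤ δ) (hδ : δ < 1 / 4)
    (hη : 0 < η) : ∀ᶠ x : ℝ in atTop, ∃ (A B : ℕ) (s : Finset ℕ), x ^ β ≤ B ∧ B < x ∧
      A * ⌊x ^ (1 / 4 + δ)⌋₊ < x ∧ 2 * ((A : ℝ) * B) ≤ η * ⌊x ^ (1 / 4 + δ)⌋₊ ∧
      (∀ a ∈ s, a.Prime ∧ a ≤ A ∧ 4 ≤ η * a) ∧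
      x ^ (1 / 2 + 2 * δ - 4 * β) ≤ s.card * ⌊x ^ (1 / 4 + δ)⌋₊ := by
  filter_upwards [eventually_exists_shift_lengths hβ hβδ hδ hη,
    (tendsto_rpow_atTop (by linarith : 0 < 1 / 4 + δ - 2 * β)).eventually
      (eventually_forall_ge_atTop.mpr <|
        eventually_rpow_le_card_primes (by linarith : 0 < 1 - β) (by linarith) hη),
    eventually_mul_rpow_le_floor_rpow 1 (by linarith : 0 < 1 / 4 + δ)
      (by linarith : 1 / 4 + δ - β < 1 / 4 + δ),
    eventually_ge_atTop 1] with x ⟨A, B, hA, hB, hBx, hAN, hAB⟩ hcard hN hx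
  have hx0 : 0 < x := by linarith
  have hs : x ^ (1 / 4 + δ - 3 * β) ≤ (A.primesLE.filter fun l : ℕ ↦ 4 ≤ η * l).card := by
    calc x ^ (1 / 4 + δ - 3 * β) ≤ (x ^ (1 / 4 + δ - 2 * β)) ^ (1 - β) := by
          rw [← Real.rpow_mul hx0.le]
          exact Real.rpow_le_rpow_of_exponent_le hx (by nlinarith)
      _ ≤ (A : ℝ) ^ (1 - β) := by
          gcongr
          linarith
      _ ≤ _ := by simpa only [Nat.floor_natCast] using hcard A hA
  refine ⟨A, B, A.primesLE.filter fun l : ℕ ↦ 4 ≤ η * l, hB, hBx, hAN, hAB, fun a ha ↦ ?_, ?_⟩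
  · rw [Finset.mem_filter, Nat.mem_primesLE] at ha
    exact ⟨ha.1.2, ha.1.1, ha.2⟩
  · rw [one_mul] at hN
    calc x ^ (1 / 2 + 2 * δ - 4 * β) = x ^ (1 / 4 + δ - 3 * β) * x ^ (1 / 4 + δ - β) := by
          rw [← Real.rpow_add hx0]
          ring_nf
      _ ≤ _ := by gcongr

lemma mul_card_mul_le_rpow_of_le_sum_re {p : ℕ} [Fact p.Prime] {χ : MulChar (ZMod p) ℂ}
    {q g r A N B : ℕ} {β η : ℝ} {s : Finset ℕ} (hr : 1 ≤ r) (hβ : β = 1 / (2 * r)) (hq : q.Prime)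
    (hg : q * g + 1 = p) (hχ : orderOf χ = q) (hqβ : q ≤ (p : ℝ) ^ β)
    (hp : 100 * r ^ 2 * (p : ℝ) ^ (4 * β) ≤ p) (hη : 0 < η) (hB : (p : ℝ) ^ β ≤ B) (hBp : B < p)
    (hAN : A * N < p) (hAB : 2 * ((A : ℝ) * B) ≤ η * N)
    (hs : ∀ a ∈ s, a.Prime ∧ a ≤ A ∧ 4 ≤ η * a)
    (hsum : 2 * η * N ≤ ∑ n ∈ Finset.Ioc 0 N, (χ (n : ZMod p)).re) :
    η / 4 * (η / 2) ^ (2 * r) * (s.card * N) ≤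
      (r ^ (2 * r) + 20 * r) * (p : ℝ) ^ (2 * β + 1 / 2) := by
  have hp0 : (0 : ℝ) < p := by exact_mod_cast (Fact.out : p.Prime).pos
  have hqpow (k : ℕ) : (q : ℝ) ^ k ≤ (p : ℝ) ^ (k * β) := by
    rw [mul_comm, Real.rpow_mul_natCast hp0.le]
    gcongr
  have hpB : √p ≤ (B : ℝ) ^ r := by
    rw [Real.sqrt_eq_rpow, show (1 / 2 : ℝ) = β * r by rw [hβ]; field_simp,
      Real.rpow_mul_natCast hp0.le]
    gcongr
  have hsize : 100 * r ^ 2 * q ^ 4 ≤ p := by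
    exact_mod_cast (mul_le_mul_of_nonneg_left (hqpow 4) (by positivity)).trans hp
  have hB0 : 0 < B := by exact_mod_cast (Real.rpow_pos_of_pos hp0 β).trans_le hB
  refine (mul_card_mul_le_of_le_sum_re hr hq hg hχ hsize hη hB0 hBp hpB hAN hAB hs hsum).trans ?_
  rw [Real.rpow_add hp0, ← Real.sqrt_eq_rpow, ← mul_assoc]
  gcongr
  exact hqpow 2

theorem eventually_sum_re_lt {δ η : ℝ} {r : ℕ} (hδ : 0 < δ) (hδ4 : δ < 1 / 4) (hη : 0 < η)
    (hr : 4 ≤ δ * r) : ∀ᶠ p : ℕ in atTop, ∀ [Fact p.Prime] (q g : ℕ), q.Prime → q * g + 1 = p →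
      q ≤ (p : ℝ) ^ (1 / (2 * r) : ℝ) → ∀ χ : MulChar (ZMod p) ℂ, orderOf χ = q →
      ∑ n ∈ Finset.Ioc 0 ⌊(p : ℝ) ^ (1 / 4 + δ)⌋₊, (χ (n : ZMod p)).re <
        2 * η * ⌊(p : ℝ) ^ (1 / 4 + δ)⌋₊ := by
  have hr0 : (0 : ℝ) < r := pos_of_mul_pos_right (by linarith) hδ.le
  -- A block length just above `p ^ β = p ^ (1 / (2 * r))` balances the two terms of the moment.
  set β : ℝ := 1 / (2 * r) with hβ
  have hβ0 : 0 < β := by positivity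
  have hβδ : 8 * β ≤ δ := by
    rw [hβ, mul_one_div, div_le_iff₀ (by positivity)]
    linarith
  set c : ℝ := η / 4 * (η / 2) ^ (2 * r)
  set D : ℝ := r ^ (2 * r) + 20 * r
  have hc : 0 < c := by positivity
  have hcast := tendsto_natCast_atTop_atTop (R := ℝ)
  filter_upwards [hcast.eventually (eventually_exists_shifts hβ0 hβδ hδ4 hη),
    hcast.eventually (eventually_mul_rpow_le_rpow (100 * r ^ 2) (by linarith : 4 * β < 1)),
    hcast.eventually (eventually_mul_rpow_le_rpow (D / c + 1)
      (by linarith : 2 * β + 1 / 2 < 1 / 2 + 2 * δ - 4 * β))]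
    with p ⟨A, B, s, hB, hBp, hAN, hAB, hs, hcard⟩ hp hexponent _ q g hq hqg hqβ χ hχ
  have hp0 : (0 : ℝ) < p := by exact_mod_cast (Fact.out : p.Prime).pos
  rw [Real.rpow_one] at hp
  by_contra! hsum
  refine absurd (mul_card_mul_le_rpow_of_le_sum_re (by exact_mod_cast hr0) hβ hq hqg hχ hqβ hp hη
    hB (by exact_mod_cast hBp) (by exact_mod_cast hAN) hAB hs hsum) (not_le.mpr ?_)
  calc D * (p : ℝ) ^ (2 * β + 1 / 2) < (D + c) * (p : ℝ) ^ (2 * β + 1 / 2) := by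
        gcongr
        linarith
    _ = c * ((D / c + 1) * (p : ℝ) ^ (2 * β + 1 / 2)) := by field_simp
    _ ≤ c * (s.card * ⌊(p : ℝ) ^ (1 / 4 + δ)⌋₊) :=
        mul_le_mul_of_nonneg_left (hexponent.trans hcard) hc.le

end Burgess

section Nonresidues

open Filter

lemma exists_eventually_le_sum_re {κ : ℝ} (hκ : Real.exp (-1 / 2) < κ) (hκ1 : κ ≤ 1) :
    ∃ η : ℝ, 0 < η ∧ ∀ᶠ N : ℕ in atTop, ∀ f : ℕ →* ℂ, (∀ n, ‖f n‖ ≤ 1) →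
      (∀ l : ℕ, l.Prime → l ≤ (N : ℝ) ^ κ → f l = 1) →
      2 * η * N ≤ ∑ n ∈ Finset.Ioc 0 N, (f n).re := by
  have hκ0 : 0 < κ := (Real.exp_pos _).trans hκ
  have hlog : -1 / 2 < Real.log κ := (Real.lt_log_iff_exp_lt hκ0).mpr hκ
  have hη : 0 < (1 / 2 + Real.log κ) / 2 := by linarith
  refine ⟨_, hη, ?_⟩
  filter_upwards [((tendsto_rpow_atTop hκ0).comp tendsto_natCast_atTop_atTop).eventually
    (eventually_primeReciprocalSum_rpow_le (one_le_inv_iff₀.mpr ⟨hκ0, hκ1⟩) hη)] with N hN f hf hfl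
  refine le_trans ?_ (mul_one_sub_primeReciprocalSum_le_sum_re hf (by positivity) hfl N)
  rw [Function.comp_apply, Real.rpow_rpow_inv N.cast_nonneg hκ0.ne', Real.log_inv] at hN
  rw [mul_comm]
  gcongr
  linarith

lemma four_mul_one_div_four_mul_sqrt_exp_one :
    4 * (1 / (4 * √(Real.exp 1))) = Real.exp (-1 / 2) := by
  rw [neg_div, Real.exp_neg, Real.exp_half]
  field_simp

lemma one_div_four_mul_sqrt_exp_one_mem_Icc :
    1 / (4 * √(Real.exp 1)) ∈ Set.Icc (1 / 7 : ℝ) (1 / 6) := by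
  have hlower : 3 / 2 ≤ √(Real.exp 1) :=
    Real.le_sqrt_of_sq_le (by linarith [Real.exp_one_gt_d9])
  have hupper : √(Real.exp 1) ≤ 7 / 4 :=
    Real.sqrt_le_iff.mpr ⟨by norm_num1, by linarith [Real.exp_one_lt_d9]⟩
  exact ⟨one_div_le_one_div_of_le (by positivity) (by linarith),
    one_div_le_one_div_of_le (by norm_num1) (by linarith)⟩

lemma exists_mulChar_orderOf_eq_and_apply_eq_one {p q g : ℕ} [Fact p.Prime] (hq : q ≠ 0)
    (hqg : q * g + 1 = p) :
    ∃ χ : MulChar (ZMod p) ℂ, orderOf χ = q ∧ ∀ z : ZMod p, z ^ g = 1 → χ z = 1 := by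
  obtain ⟨χ, hχ⟩ := MulChar.exists_mulChar_orderOf (ZMod p)
    ⟨g, by rw [ZMod.card, ← hqg, Nat.add_sub_cancel]⟩ (Complex.isPrimitiveRoot_exp q hq)
  refine ⟨χ, hχ, fun z hz ↦
    (mulChar_apply_eq_one_iff_pow_eq_one (by rw [hχ, hqg, ZMod.card]) ?_).mpr hz⟩
  rintro rfl
  have hg : g ≠ 0 := by
    rintro rfl
    exact (Fact.out : p.Prime).one_lt.ne hqg
  exact zero_ne_one ((zero_pow hg).symm.trans hz)

theorem eventually_exists_prime_pow_ne_one {ε : ℝ} (hε : 0 < ε) (hε4 : ε ≤ 1 / 4) :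
    ∀ᶠ p : ℕ in atTop, p.Prime → ∀ q g : ℕ, q.Prime → q * g + 1 = p → ∃ l : ℕ, l.Prime ∧
      l ≤ (p : ℝ) ^ (1 / (4 * √(Real.exp 1)) + ε) ∧ (l : ZMod p) ^ g ≠ 1 := by
  obtain ⟨hτ7, hτ6⟩ := one_div_four_mul_sqrt_exp_one_mem_Icc
  have hτexp := four_mul_one_div_four_mul_sqrt_exp_one
  set τ := 1 / (4 * √(Real.exp 1))
  obtain ⟨η, hη, hvinogradov⟩ := exists_eventually_le_sum_re
    (by linarith : Real.exp (-1 / 2) < 4 * τ + ε) (by linarith)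
  obtain ⟨r, hr⟩ := exists_nat_ge (4 / (ε / 2))
  rw [div_le_iff₀' (by positivity)] at hr
  have hr1 : 1 < (r : ℝ) := by nlinarith
  have hN : Tendsto (fun p : ℕ ↦ ⌊(p : ℝ) ^ (1 / 4 + ε / 2)⌋₊) atTop atTop :=
    tendsto_nat_floor_atTop.comp
      ((tendsto_rpow_atTop (by positivity)).comp tendsto_natCast_atTop_atTop)
  filter_upwards [hN.eventually hvinogradov,
    eventually_index_le_rpow_of_pow_eq_one (k := 7) (by norm_num1)
      (by positivity : 0 < (1 / (2 * r) : ℝ))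
      ((div_lt_iff₀ (by positivity)).mpr (by linarith)),
    eventually_sum_re_lt (half_pos hε) (by linarith) hη hr]
    with p hvinogradov hindex hburgess hp q g hq hqg
  have : Fact p.Prime := ⟨hp⟩
  have hp1 : (1 : ℝ) ≤ p := by exact_mod_cast hp.one_le
  by_contra! hres
  have hqp := hindex hp q g hqg fun l hl hlp ↦ hres l hl <|
    hlp.trans (Real.rpow_le_rpow_of_exponent_le hp1 (by push_cast; linarith))
  obtain ⟨χ, hχ, hχ_one⟩ := exists_mulChar_orderOf_eq_and_apply_eq_one hq.ne_zero hqg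
  refine (hburgess q g hq hqg hqp χ hχ).not_ge <|
    hvinogradov ((χ : ZMod p →* ℂ).comp (Nat.castRingHom (ZMod p) : ℕ →* ZMod p))
      (fun n ↦ DirichletCharacter.norm_le_one χ n) fun l hl hlN ↦ hχ_one l (hres l hl ?_)
  calc (l : ℝ) ≤ ((p : ℝ) ^ (1 / 4 + ε / 2)) ^ (4 * τ + ε) := by
        refine hlN.trans ?_
        gcongr
        exact Nat.floor_le (by positivity)
    _ = (p : ℝ) ^ ((1 / 4 + ε / 2) * (4 * τ + ε)) := (Real.rpow_mul (by positivity) _ _).symm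
    _ ≤ (p : ℝ) ^ (τ + ε) := Real.rpow_le_rpow_of_exponent_le hp1 (by nlinarith)

theorem eventually_forall_primeFactors_exists_prime_pow_ne_one {ε : ℝ} (hε : 0 < ε) :
    ∀ᶠ p : ℕ in atTop, p.Prime → ∀ q ∈ (p - 1).primeFactors, ∃ l : ℕ, l.Prime ∧ l < p ∧
      l ≤ (p : ℝ) ^ (1 / (4 * √(Real.exp 1)) + ε) ∧ (l : ZMod p) ^ ((p - 1) / q) ≠ 1 := by
  have hε' := min_le_right ε (1 / 4)
  filter_upwards [eventually_exists_prime_pow_ne_one (lt_min hε (by norm_num1)) hε']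
    with p h hp q hq
  have hq' := Nat.mem_primeFactors.mp hq
  obtain ⟨l, hl, hlp, hpow⟩ := h hp q ((p - 1) / q) hq'.1 <| by
    rw [Nat.mul_div_cancel' hq'.2.1, Nat.sub_add_cancel hp.one_le]
  refine ⟨l, hl, ?_, hlp.trans ?_, hpow⟩
  · refine Nat.cast_lt.mp (hlp.trans_lt ?_)
    exact Real.rpow_lt_self_of_one_lt (by exact_mod_cast hp.one_lt) <| by
      linarith [one_div_four_mul_sqrt_exp_one_mem_Icc.2]
  · exact Real.rpow_le_rpow_of_exponent_le (by exact_mod_cast hp.one_le) (by simp)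

end Nonresidues

lemma closure_eq_top_of_forall_exists_pow_ne_one {G : Type*} [Group G] [Finite G] {S : Set G}
    (h : ∀ q ∈ (Nat.card G).primeFactors, ∃ u ∈ S, u ^ (Nat.card G / q) ≠ 1) :
    Subgroup.closure S = ⊤ := by
  by_contra hne
  set K := Subgroup.closure S
  obtain ⟨q, hq, j, hj⟩ := Nat.exists_prime_and_dvd (mt Subgroup.index_eq_one.mp hne)
  have hcard : Nat.card G = q * (Nat.card K * j) := by
    rw [← K.card_mul_index, hj, mul_left_comm]
  obtain ⟨u, hu, hpow⟩ := h q (Nat.mem_primeFactors.mpr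
    ⟨hq, ⟨_, hcard⟩, Nat.card_pos.ne'⟩)
  refine hpow ?_
  rw [hcard, Nat.mul_div_cancel_left _ hq.pos, pow_mul,
    orderOf_dvd_iff_pow_eq_one.mp (K.orderOf_dvd_natCard (Subgroup.subset_closure hu)), one_pow]

end SmallGeneratingSet

/-- **Lemma 1.1.** For every `ε > 0` there exists `p₀` such that for every prime `p ≥ p₀`
there exist `ω(p-1)` integers `x₁, …, x_{ω(p-1)}`, each in `[1, p^{1/(4√e)+ε}]`, whose
residues in `(ZMod p)ˣ` generate the multiplicative group `(ZMod p)ˣ`. -/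
theorem small_generating_set_card_omega (ε : ℝ) (hε : 0 < ε) :
    ∃ p₀ : ℕ, ∀ p : ℕ, p.Prime → p₀ ≤ p →
      ∃ x : Fin ((p - 1).primeFactors.card) → ℕ,
        (∀ i, 1 ≤ x i ∧ (x i : ℝ) ≤ (p : ℝ) ^ (1 / (4 * Real.sqrt (Real.exp 1)) + ε)) ∧
        Subgroup.closure {u : (ZMod p)ˣ | ∃ i, (u : ZMod p) = (x i : ZMod p)} = ⊤ := by
  obtain ⟨p₀, hp₀⟩ := Filter.eventually_atTop.mp <|
    SmallGeneratingSet.eventually_forall_primeFactors_exists_prime_pow_ne_one hε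
  refine ⟨p₀, fun p hp hpp₀ ↦ ?_⟩
  have : Fact p.Prime := ⟨hp⟩
  choose! l hl hlp hl_le hl_pow using hp₀ p hpp₀ hp
  let e := (p - 1).primeFactors.equivFin
  refine ⟨fun i ↦ l (e.symm i), fun i ↦ ⟨(hl _ (e.symm i).2).one_le, hl_le _ (e.symm i).2⟩,
    SmallGeneratingSet.closure_eq_top_of_forall_exists_pow_ne_one fun q hq ↦ ?_⟩
  rw [Nat.card_eq_fintype_card, ZMod.card_units] at hq ⊢
  have hne : (l q : ZMod p) ≠ 0 :=
    SmallGeneratingSet.natCast_ne_zero_of_lt (hl q hq).pos (hlp q hq)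
  refine ⟨Units.mk0 _ hne, ⟨e ⟨q, hq⟩, by simp⟩, fun hpow ↦ hl_pow q hq ?_⟩
  simpa using congrArg Units.val hpow
end

section
/- Fix ε > 0. There exists a constant C > 0 such that the set of primes p for which the following holds has asymptotic density 1 among all primes: there exists a set S of integers contained in [1, p^{1/(4√e)+ε}] with #S ≤ C·(log log log p)² whose residues modulo p generate the multiplicative group (ZMod p)ˣ. Precisely, #{p ≤ x prime : no such set S exists} = o(π(x)) as x → ∞. -/
open Filter
open scoped Classical

/-!
Let `P` be the set of primes up to `y`. A subset of `P` generates `(ℤ/pℤ)ˣ` as soon as, for every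
prime `q ∣ p - 1`, it contains a `q`-th power non-residue. If no subset of `P` with at most `4m`
elements does, then by a union bound over `q`, using `∑ q⁻² < 1`, for some `q` the proportion of
`q`-th power residues in `P` exceeds `q ^ (-1 / (2m))`. The products of `m` elements of `P` are
then residues in proportion at least `q ^ (-1 / 2)`, while among all integers the proportion is at
most `1 / q`.

For distinct primes `p` these biases are uncorrelated by the Chinese remainder theorem, and every
integer up to `y ^ m` is a product of `m` primes in at most `m ^ m` ways. A second moment estimate
therefore leaves only `O(y)` such `p` up to a fixed power `y ^ L`, once `m` exceeds about `3L`.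
Taking for `y` a small power of `x`, a bounded number of small primes generates `(ℤ/pℤ)ˣ` for all
but `O(x ^ η)` of the primes `p ≤ x`.
-/

section PeriodicSums

open Finset

variable {d e : ℕ}

lemma sum_range_of_periodic {M : Type*} [AddCommMonoid M] {f : ℕ → M}
    (hf : Function.Periodic f d) (N : ℕ) :
    ∑ n ∈ range N, f n = (N / d) • ∑ n ∈ range d, f n + ∑ n ∈ range (N % d), f n := by
  have shift (k r : ℕ) : ∑ n ∈ range (d * k + r), f n =
      k • ∑ n ∈ range d, f n + ∑ n ∈ range r, f n := by
    induction k with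
    | zero => simp
    | succ k ih =>
      have hf' (n : ℕ) : f (d + n) = f n := by rw [add_comm, hf]
      rw [show d * (k + 1) + r = d + (d * k + r) by ring, sum_range_add]
      simp only [hf', ih, succ_nsmul', add_assoc]
  rw [← shift, Nat.div_add_mod]

lemma abs_sum_range_le_of_periodic {f : ℕ → ℝ} {B : ℝ} (hd : 0 < d)
    (hf : Function.Periodic f d) (hsum : ∑ n ∈ range d, f n = 0) (hB : ∀ n, |f n| ≤ B) (N : ℕ) :
    |∑ n ∈ range N, f n| ≤ d * B := by
  have hB0 : 0 ≤ B := (abs_nonneg _).trans (hB 0)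
  calc |∑ n ∈ range N, f n|
      = |∑ n ∈ range (N % d), f n| := by
        rw [sum_range_of_periodic hf, hsum, smul_zero, zero_add]
    _ ≤ ∑ n ∈ range (N % d), |f n| := abs_sum_le_sum_abs _ _
    _ ≤ (N % d : ℕ) * B := by
        simpa using sum_le_card_nsmul (range (N % d)) (fun n => |f n|) B fun n _ => hB n
    _ ≤ d * B := by gcongr; exact (Nat.mod_lt N hd).le

lemma sum_range_le_of_periodic {f : ℕ → ℝ} (hd : 0 < d) (hf : Function.Periodic f d)
    (h0 : ∀ n, 0 ≤ f n) (N : ℕ) :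
    ∑ n ∈ range N, f n ≤ (N / d + 1 : ℕ) * ∑ n ∈ range d, f n := by
  have hmod : ∑ n ∈ range (N % d), f n ≤ ∑ n ∈ range d, f n :=
    sum_le_sum_of_subset_of_nonneg (range_mono (Nat.mod_lt N hd).le) fun n _ _ => h0 n
  rw [sum_range_of_periodic hf, nsmul_eq_mul, Nat.cast_add_one, add_one_mul]
  gcongr

lemma sum_range_mul_of_coprime {R : Type*} [CommSemiring R] {f g : ℕ → R}
    (h : d.Coprime e) (hf : Function.Periodic f d) (hg : Function.Periodic g e) :
    ∑ n ∈ range (d * e), f n * g n = (∑ n ∈ range d, f n) * ∑ n ∈ range e, g n := by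
  rw [sum_mul_sum, ← sum_product']
  refine sum_nbij' (fun n => (n % d, n % e)) (fun a => (Nat.chineseRemainder h a.1 a.2 : ℕ))
    ?_ ?_ ?_ ?_ ?_
  · intro n hn
    have hpos : 0 < d * e := (Nat.zero_le n).trans_lt (mem_range.1 hn)
    exact mem_product.2 ⟨mem_range.2 (Nat.mod_lt _ (Nat.pos_of_mul_pos_right hpos)),
      mem_range.2 (Nat.mod_lt _ (Nat.pos_of_mul_pos_left hpos))⟩
  · intro a ha
    obtain ⟨ha₁, ha₂⟩ := mem_product.1 ha
    exact mem_range.2 (Nat.chineseRemainder_lt_mul h _ _ (Nat.ne_zero_of_lt (mem_range.1 ha₁))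
      (Nat.ne_zero_of_lt (mem_range.1 ha₂)))
  · intro n hn
    have hmod : n ≡ Nat.chineseRemainder h (n % d) (n % e) [MOD d * e] :=
      Nat.chineseRemainder_modEq_unique h (Nat.mod_modEq n d).symm (Nat.mod_modEq n e).symm
    have hpos := Nat.ne_zero_of_lt (mem_range.1 hn)
    exact hmod.symm.eq_of_lt_of_lt (Nat.chineseRemainder_lt_mul h _ _
      (left_ne_zero_of_mul hpos) (right_ne_zero_of_mul hpos)) (mem_range.1 hn)
  · intro a ha
    obtain ⟨ha₁, ha₂⟩ := mem_product.1 ha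
    obtain ⟨h₁, h₂⟩ := (Nat.chineseRemainder h a.1 a.2).2
    exact Prod.ext (Eq.trans h₁ (Nat.mod_eq_of_lt (mem_range.1 ha₁)))
      (Eq.trans h₂ (Nat.mod_eq_of_lt (mem_range.1 ha₂)))
  · intro n _
    simp only [hf.map_mod_nat, hg.map_mod_nat]

lemma abs_sum_range_mul_le_of_coprime {f g : ℕ → ℝ} {B : ℝ} (hd : 0 < d) (he : 0 < e)
    (h : d.Coprime e) (hf : Function.Periodic f d) (hg : Function.Periodic g e)
    (hsum : ∑ n ∈ range d, f n = 0) (hfB : ∀ n, |f n| ≤ B) (hgB : ∀ n, |g n| ≤ B) (N : ℕ) :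
    |∑ n ∈ range N, f n * g n| ≤ d * e * B ^ 2 := by
  have hper : Function.Periodic (fun n => f n * g n) (d * e) :=
    Function.Periodic.mul (by simpa [mul_comm] using hf.nat_mul e) (hg.nat_mul d)
  have hbound (n : ℕ) : |f n * g n| ≤ B ^ 2 := by
    rw [abs_mul, sq]
    exact mul_le_mul (hfB n) (hgB n) (abs_nonneg _) ((abs_nonneg _).trans (hfB n))
  have hzero : ∑ n ∈ range (d * e), f n * g n = 0 := by
    rw [sum_range_mul_of_coprime h hf hg, hsum, zero_mul]
  exact_mod_cast abs_sum_range_le_of_periodic (Nat.mul_pos hd he) hper hzero hbound N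

lemma sum_range_sq_le_of_periodic {f : ℕ → ℝ} {N : ℕ} (hd : 0 < d) (hdN : d ≤ N)
    (hf : Function.Periodic f d) (hsq : ∑ n ∈ range d, f n ^ 2 ≤ d) :
    ∑ n ∈ range N, f n ^ 2 ≤ 2 * N := by
  calc ∑ n ∈ range N, f n ^ 2
      ≤ (N / d + 1 : ℕ) * ∑ n ∈ range d, f n ^ 2 :=
        sum_range_le_of_periodic hd (fun n => by rw [hf]) (fun n => sq_nonneg _) N
    _ ≤ (N / d + 1 : ℕ) * d := by gcongr
    _ ≤ 2 * N := by
        rw [Nat.cast_add_one, add_one_mul, two_mul]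
        exact_mod_cast add_le_add (Nat.div_mul_le_self N d) hdN

/- Expand the square: the diagonal terms are second moments, and off the diagonal the Chinese
remainder theorem gives sums over full periods that vanish. -/
lemma sum_range_sq_sum_le_of_periodic {E : Finset ℕ} {f : ℕ → ℕ → ℝ} {Q N : ℕ} {B : ℝ}
    (hE : (E : Set ℕ).Pairwise Nat.Coprime) (hpos : ∀ d ∈ E, 0 < d) (hEQ : ∀ d ∈ E, d ≤ Q)
    (hQN : Q ≤ N) (hf : ∀ d ∈ E, Function.Periodic (f d) d)
    (hsum : ∀ d ∈ E, ∑ n ∈ range d, f d n = 0) (hB : ∀ d ∈ E, ∀ n, |f d n| ≤ B)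
    (hsq : ∀ d ∈ E, ∑ n ∈ range d, f d n ^ 2 ≤ d) :
    ∑ n ∈ range N, (∑ d ∈ E, f d n) ^ 2 ≤ 2 * N * #E + (#E : ℝ) ^ 2 * (Q ^ 2 * B ^ 2) := by
  have correlation : ∀ d ∈ E, ∀ e ∈ E, ∑ n ∈ range N, f d n * f e n ≤
      (if d = e then (2 * N : ℝ) else 0) + Q ^ 2 * B ^ 2 := by
    intro d hd e he
    rcases eq_or_ne d e with rfl | hne
    · have hdiag := sum_range_sq_le_of_periodic (hpos d hd) ((hEQ d hd).trans hQN) (hf d hd)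
        (hsq d hd)
      simp only [← sq, if_true]
      exact hdiag.trans (le_add_of_nonneg_right (by positivity))
    · rw [if_neg hne, zero_add]
      calc ∑ n ∈ range N, f d n * f e n
          ≤ |∑ n ∈ range N, f d n * f e n| := le_abs_self _
        _ ≤ d * e * B ^ 2 := abs_sum_range_mul_le_of_coprime (hpos d hd) (hpos e he)
            (hE hd he hne) (hf d hd) (hf e he) (hsum d hd) (hB d hd) (hB e he) N
        _ ≤ Q * Q * B ^ 2 := by gcongr <;> exact hEQ _ ‹_›
        _ = Q ^ 2 * B ^ 2 := by ring
  calc ∑ n ∈ range N, (∑ d ∈ E, f d n) ^ 2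
      = ∑ d ∈ E, ∑ e ∈ E, ∑ n ∈ range N, f d n * f e n := by
        simp_rw [sq, sum_mul_sum]
        rw [sum_comm]
        exact sum_congr rfl fun d _ => sum_comm
    _ ≤ ∑ d ∈ E, ∑ e ∈ E, ((if d = e then (2 * N : ℝ) else 0) + Q ^ 2 * B ^ 2) :=
        sum_le_sum fun d hd => sum_le_sum fun e he => correlation d hd e he
    _ = 2 * N * #E + (#E : ℝ) ^ 2 * (Q ^ 2 * B ^ 2) := by
        simp only [sum_add_distrib, sum_ite_eq, sum_const, nsmul_eq_mul, sum_ite_mem, inter_self]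
        ring

end PeriodicSums

section CenteredIndicator

open Finset

/-- The indicator function of `A ⊆ ℕ` minus the density of `A` in `[0, d)`. For `d`-periodic `A`
this has mean zero over every period. -/
noncomputable def centeredIndicator (A : ℕ → Prop) (d n : ℕ) : ℝ :=
  (if A n then 1 else 0) - Nat.count A d / d

variable {A : ℕ → Prop} {d : ℕ}

lemma periodic_centeredIndicator (hA : Function.Periodic A d) :
    Function.Periodic (centeredIndicator A d) d := fun n => by
  simp only [centeredIndicator, hA n]

lemma sum_indicator_range : ∑ n ∈ range d, (if A n then (1 : ℝ) else 0) = Nat.count A d := by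
  rw [sum_boole, Nat.count_eq_card_filter_range]

lemma sum_range_centeredIndicator : ∑ n ∈ range d, centeredIndicator A d n = 0 := by
  simp only [centeredIndicator, sum_sub_distrib, sum_indicator_range, sum_const, card_range,
    nsmul_eq_mul]
  rcases eq_or_ne d 0 with rfl | hd
  · simp
  · rw [mul_div_cancel₀ _ (Nat.cast_ne_zero.2 hd), sub_self]

lemma abs_centeredIndicator_le_one (n : ℕ) : |centeredIndicator A d n| ≤ 1 := by
  have h0 : (0 : ℝ) ≤ Nat.count A d / d := by positivity
  have h1 : (Nat.count A d / d : ℝ) ≤ 1 :=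
    div_le_one_of_le₀ (Nat.cast_le.2 (Nat.count_le A)) d.cast_nonneg
  rw [centeredIndicator, abs_le]
  split_ifs <;> constructor <;> linarith

lemma sum_range_centeredIndicator_sq_le :
    ∑ n ∈ range d, centeredIndicator A d n ^ 2 ≤ Nat.count A d := by
  have hα : (0 : ℝ) ≤ Nat.count A d / d := by positivity
  have expand (n : ℕ) : centeredIndicator A d n ^ 2 =
      (1 - Nat.count A d / d) * (if A n then 1 else 0) -
        Nat.count A d / d * centeredIndicator A d n := by
    rw [centeredIndicator]
    split_ifs <;> ring
  simp only [expand, sum_sub_distrib, ← mul_sum, sum_range_centeredIndicator, sum_indicator_range]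
  nlinarith [(Nat.count A d).cast_nonneg (α := ℝ)]

end CenteredIndicator

section PowerResidues

open Finset

/-- `n` is a `q`-th power residue modulo the prime `p`, where `q ∣ p - 1`, in the form of Euler's
criterion. For `q < p` this excludes the multiples of `p`. -/
def IsPowerResidue (q p n : ℕ) : Prop := (n : ZMod p) ^ ((p - 1) / q) = 1

variable {p q : ℕ}

lemma periodic_isPowerResidue : Function.Periodic (IsPowerResidue q p) p := fun n => by
  simp only [IsPowerResidue, Nat.cast_add, CharP.cast_eq_zero, add_zero]

lemma IsPowerResidue.prod {ι : Type*} {s : Finset ι} {f : ι → ℕ}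
    (h : ∀ i ∈ s, IsPowerResidue q p (f i)) : IsPowerResidue q p (∏ i ∈ s, f i) := by
  rw [IsPowerResidue, Nat.cast_prod, ← prod_pow]
  exact prod_eq_one h

lemma count_isPowerResidue_mul_le (hp : p.Prime) (hq : q.Prime) (hqp : q ∣ p - 1) :
    Nat.count (IsPowerResidue q p) p * q ≤ p := by
  have : Fact p.Prime := ⟨hp⟩
  have hpos : 0 < (p - 1) / q :=
    Nat.div_pos (Nat.le_of_dvd (Nat.sub_pos_of_lt hp.one_lt) hqp) hq.pos
  have hroots : Nat.count (IsPowerResidue q p) p ≤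
      #(Polynomial.nthRoots ((p - 1) / q) (1 : ZMod p)).toFinset := by
    rw [Nat.count_eq_card_filter_range]
    refine card_le_card_of_injOn (fun n => (n : ZMod p)) (fun n hn => ?_) fun a ha b hb hab => ?_
    · rw [mem_coe, Multiset.mem_toFinset, Polynomial.mem_nthRoots hpos]
      exact (mem_filter.1 hn).2
    · have ha' := mem_range.1 (mem_filter.1 ha).1
      have hb' := mem_range.1 (mem_filter.1 hb).1
      exact ((ZMod.natCast_eq_natCast_iff a b p).1 hab).eq_of_lt_of_lt ha' hb'
  calc Nat.count (IsPowerResidue q p) p * q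
      ≤ (p - 1) / q * q := by
        gcongr
        exact hroots.trans ((Multiset.toFinset_card_le _).trans (Polynomial.card_nthRoots _ _))
    _ ≤ p := (Nat.div_mul_le_self _ _).trans (Nat.sub_le _ _)

lemma count_isPowerResidue_div_le (hp : p.Prime) (hq : q.Prime) (hqp : q ∣ p - 1) :
    (Nat.count (IsPowerResidue q p) p / p : ℝ) ≤ 1 / q := by
  rw [div_le_div_iff₀ (mod_cast hp.pos) (mod_cast hq.pos), one_mul]
  exact_mod_cast count_isPowerResidue_mul_le hp hq hqp

/- The weight `√q` makes the second moment of the centered indicator over a period at most `p`. -/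
lemma sum_range_sq_sum_isPowerResidue_le {E : Finset ℕ} {q : ℕ → ℕ} {Q N : ℕ}
    (hE : ∀ p ∈ E, p.Prime ∧ p ≤ Q) (hq : ∀ p ∈ E, (q p).Prime ∧ q p ∣ p - 1) (hQN : Q ≤ N) :
    ∑ n ∈ range N, (∑ p ∈ E, √(q p) * centeredIndicator (IsPowerResidue (q p) p) p n) ^ 2 ≤
      2 * N * #E + (#E : ℝ) ^ 2 * Q ^ 3 := by
  have hqQ : ∀ p ∈ E, q p ≤ Q := fun p hp =>
    (Nat.le_of_dvd (Nat.sub_pos_of_lt (hE p hp).1.one_lt) (hq p hp).2).trans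
      ((Nat.sub_le p 1).trans (hE p hp).2)
  have hsq : ∀ p ∈ E, ∑ n ∈ range p,
      (√(q p) * centeredIndicator (IsPowerResidue (q p) p) p n) ^ 2 ≤ p := by
    intro p hp
    simp only [mul_pow, Real.sq_sqrt (q p).cast_nonneg, ← mul_sum]
    calc (q p : ℝ) * ∑ n ∈ range p, centeredIndicator (IsPowerResidue (q p) p) p n ^ 2
        ≤ q p * Nat.count (IsPowerResidue (q p) p) p := by
          gcongr
          exact sum_range_centeredIndicator_sq_le
      _ ≤ p := by
          rw [mul_comm]
          exact_mod_cast count_isPowerResidue_mul_le (hE p hp).1 (hq p hp).1 (hq p hp).2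
  refine (sum_range_sq_sum_le_of_periodic (B := √Q)
    (fun p hp r hr => (Nat.coprime_primes (hE p hp).1 (hE r hr).1).2)
    (fun p hp => (hE p hp).1.pos) (fun p hp => (hE p hp).2) hQN ?_ ?_ ?_ hsq).trans_eq ?_
  · intro p _ n
    simp only [periodic_centeredIndicator periodic_isPowerResidue n]
  · intro p _
    rw [← mul_sum, sum_range_centeredIndicator, mul_zero]
  · intro p hp n
    rw [abs_mul, abs_of_nonneg (Real.sqrt_nonneg _)]
    calc √(q p) * |centeredIndicator (IsPowerResidue (q p) p) p n|
        ≤ √Q * 1 := by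
          gcongr
          · exact hqQ p hp
          · exact abs_centeredIndicator_le_one n
      _ = √Q := mul_one _
  · rw [Real.sq_sqrt Q.cast_nonneg]
    ring

end PowerResidues

section PrimeTuples

open Finset

variable {P : Finset ℕ} {m : ℕ}

/- A representation of `n` as such a product draws its `m` factors from the prime factors of `n`,
of which there are at most `m`. -/
lemma card_piFinset_filter_prod_eq_le (hP : ∀ a ∈ P, a.Prime) (n : ℕ) :
    #{t ∈ Fintype.piFinset fun _ : Fin m => P | ∏ i, t i = n} ≤ m ^ m := by
  rcases eq_empty_or_nonempty {t ∈ Fintype.piFinset fun _ : Fin m => P | ∏ i, t i = n}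
    with hempty | ⟨s, hs⟩
  · simp [hempty]
  simp only [mem_filter, Fintype.mem_piFinset] at hs
  obtain ⟨hsP, rfl⟩ := hs
  have hne : ∏ i, s i ≠ 0 := prod_ne_zero_iff.2 fun i _ => (hP _ (hsP i)).ne_zero
  have hfactors : (∏ i, s i).primeFactors ⊆ univ.image s := by
    intro r hr
    obtain ⟨i, _, hi⟩ := ((Nat.prime_of_mem_primeFactors hr).prime.dvd_finsetProd_iff s).1
      (Nat.dvd_of_mem_primeFactors hr)
    exact mem_image.2 ⟨i, mem_univ i,
      ((Nat.prime_dvd_prime_iff_eq (Nat.prime_of_mem_primeFactors hr) (hP _ (hsP i))).1 hi).symm⟩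
  have hcard : #(∏ i, s i).primeFactors ≤ m :=
    (card_le_card hfactors).trans (card_image_le.trans (by simp))
  have hsub : {t ∈ Fintype.piFinset fun _ : Fin m => P | ∏ i, t i = ∏ i, s i} ⊆
      Fintype.piFinset fun _ : Fin m => (∏ i, s i).primeFactors := by
    intro t ht
    simp only [mem_filter, Fintype.mem_piFinset] at ht
    exact Fintype.mem_piFinset.2 fun i =>
      Nat.mem_primeFactors.2 ⟨hP _ (ht.1 i), ht.2 ▸ dvd_prod_of_mem t (mem_univ i), hne⟩
  calc _ ≤ #(∏ i, s i).primeFactors ^ m := by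
        simpa only [Fintype.card_piFinset_const] using card_le_card hsub
    _ ≤ m ^ m := Nat.pow_le_pow_left hcard m

lemma sum_piFinset_prod_le {y : ℕ} (hP : ∀ a ∈ P, a.Prime) (hPy : ∀ a ∈ P, a ≤ y) {G : ℕ → ℝ}
    (hG : ∀ n, 0 ≤ G n) :
    ∑ t ∈ Fintype.piFinset fun _ : Fin m => P, G (∏ i, t i) ≤
      (m : ℝ) ^ m * ∑ n ∈ range (y ^ m + 1), G n := by
  have hmaps : ∀ t ∈ Fintype.piFinset fun _ : Fin m => P, ∏ i, t i ∈ range (y ^ m + 1) := by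
    intro t ht
    rw [mem_range, Nat.lt_succ_iff]
    simpa using prod_le_prod' fun i (_ : i ∈ univ) => hPy _ (Fintype.mem_piFinset.1 ht i)
  rw [← sum_fiberwise_of_maps_to' hmaps, mul_sum]
  refine sum_le_sum fun n _ => ?_
  rw [sum_const, nsmul_eq_mul]
  gcongr
  · exact hG n
  · exact_mod_cast card_piFinset_filter_prod_eq_le hP n

end PrimeTuples

section Sieve

open Finset

variable {P E : Finset ℕ} {m : ℕ}

lemma card_pow_div_four_le_sum_centeredIndicator {p q : ℕ} (hp : p.Prime) (hq : q.Prime)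
    (hqp : q ∣ p - 1) (h : (#P : ℝ) ^ m ≤ #{a ∈ P | IsPowerResidue q p a} ^ m * √q) :
    (#P : ℝ) ^ m / 4 ≤ ∑ t ∈ Fintype.piFinset fun _ : Fin m => P,
      √q * centeredIndicator (IsPowerResidue q p) p (∏ i, t i) := by
  have hsub : (Fintype.piFinset fun _ : Fin m => {a ∈ P | IsPowerResidue q p a}) ⊆
      {t ∈ Fintype.piFinset fun _ : Fin m => P | IsPowerResidue q p (∏ i, t i)} := by
    intro t ht
    have ht' (i : Fin m) := mem_filter.1 (Fintype.mem_piFinset.1 ht i)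
    exact mem_filter.2 ⟨Fintype.mem_piFinset.2 fun i => (ht' i).1,
      IsPowerResidue.prod fun i _ => (ht' i).2⟩
  have hcard : (#{a ∈ P | IsPowerResidue q p a} : ℝ) ^ m ≤
      #{t ∈ Fintype.piFinset fun _ : Fin m => P | IsPowerResidue q p (∏ i, t i)} := by
    have := card_le_card hsub
    rw [Fintype.card_piFinset_const] at this
    exact_mod_cast this
  have hdensity : √q * (Nat.count (IsPowerResidue q p) p / p) ≤ 3 / 4 := by
    have hsqrt : (4 / 3 : ℝ) ≤ √q := by
      refine Real.le_sqrt_of_sq_le ?_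
      have : (2 : ℝ) ≤ q := mod_cast hq.two_le
      linarith
    calc √q * (Nat.count (IsPowerResidue q p) p / p)
        ≤ √q * (1 / q) :=
          mul_le_mul_of_nonneg_left (count_isPowerResidue_div_le hp hq hqp) (Real.sqrt_nonneg _)
      _ = 1 / √q := by rw [mul_one_div, Real.sqrt_div_self']
      _ ≤ 1 / (4 / 3) := by gcongr
      _ = 3 / 4 := by norm_num
  calc (#P : ℝ) ^ m / 4 = #P ^ m - #P ^ m * (3 / 4) := by ring
    _ ≤ #{a ∈ P | IsPowerResidue q p a} ^ m * √q -
          #P ^ m * (√q * (Nat.count (IsPowerResidue q p) p / p)) := by gcongr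
    _ ≤ #{t ∈ Fintype.piFinset fun _ : Fin m => P | IsPowerResidue q p (∏ i, t i)} * √q -
          #P ^ m * (√q * (Nat.count (IsPowerResidue q p) p / p)) := by gcongr
    _ = _ := by
      simp only [centeredIndicator, ← mul_sum, sum_sub_distrib, sum_boole, sum_const,
        Fintype.card_piFinset_const, nsmul_eq_mul, Nat.cast_pow]
      ring

/- Sum the excess of power residues over all `m`-tuples from `P` and all `p ∈ E`, and compare with
the second moment by Cauchy–Schwarz. -/
lemma card_pow_mul_card_sq_le {q : ℕ → ℕ} {y Q : ℕ} (hP : ∀ a ∈ P, a.Prime ∧ a ≤ y)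
    (hE : ∀ p ∈ E, p.Prime ∧ p ≤ Q) (hq : ∀ p ∈ E, (q p).Prime ∧ q p ∣ p - 1)
    (hQ : Q ≤ y ^ m + 1)
    (h : ∀ p ∈ E, (#P : ℝ) ^ m ≤ #{a ∈ P | IsPowerResidue (q p) p a} ^ m * √(q p)) :
    (#P : ℝ) ^ m * #E ^ 2 ≤ 16 * m ^ m * (2 * (y ^ m + 1) * #E + #E ^ 2 * Q ^ 3) := by
  set F : ℕ → ℝ := fun n => ∑ p ∈ E, √(q p) * centeredIndicator (IsPowerResidue (q p) p) p n
  set T := Fintype.piFinset fun _ : Fin m => P with hT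
  have hTcard : (#T : ℝ) = (#P : ℝ) ^ m := by rw [hT, Fintype.card_piFinset_const, Nat.cast_pow]
  have first_moment : #E * ((#P : ℝ) ^ m / 4) ≤ ∑ t ∈ T, F (∏ i, t i) := by
    rw [sum_comm, ← nsmul_eq_mul]
    exact card_nsmul_le_sum _ _ _ fun p hp =>
      card_pow_div_four_le_sum_centeredIndicator (hE p hp).1 (hq p hp).1 (hq p hp).2 (h p hp)
  have second_moment : ∑ t ∈ T, F (∏ i, t i) ^ 2 ≤
      m ^ m * (2 * (y ^ m + 1) * #E + #E ^ 2 * Q ^ 3) := by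
    refine (sum_piFinset_prod_le (fun a ha => (hP a ha).1) (fun a ha => (hP a ha).2)
      fun n => sq_nonneg (F n)).trans ?_
    gcongr
    exact_mod_cast sum_range_sq_sum_isPowerResidue_le hE hq hQ
  have cauchy_schwarz : (#E * ((#P : ℝ) ^ m / 4)) ^ 2 ≤
      #P ^ m * (m ^ m * (2 * (y ^ m + 1) * #E + #E ^ 2 * Q ^ 3)) :=
    calc (#E * ((#P : ℝ) ^ m / 4)) ^ 2
        ≤ (∑ t ∈ T, F (∏ i, t i)) ^ 2 := by gcongr
      _ ≤ #P ^ m * ∑ t ∈ T, F (∏ i, t i) ^ 2 := hTcard ▸ sq_sum_le_card_mul_sum_sq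
      _ ≤ _ := by gcongr
  rcases (show (0 : ℝ) ≤ #P ^ m by positivity).eq_or_lt with h0 | hpos
  · rw [← h0, zero_mul]
    positivity
  · refine le_of_mul_le_mul_left ?_ hpos
    linear_combination 16 * cauchy_schwarz

lemma card_pow_mul_card_le {q : ℕ → ℕ} {y Q : ℕ} (hP : ∀ a ∈ P, a.Prime ∧ a ≤ y)
    (hE : ∀ p ∈ E, p.Prime ∧ p ≤ Q) (hq : ∀ p ∈ E, (q p).Prime ∧ q p ∣ p - 1)
    (hQ : 32 * m ^ m * Q ^ 3 ≤ #P ^ m)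
    (h : ∀ p ∈ E, (#P : ℝ) ^ m ≤ #{a ∈ P | IsPowerResidue (q p) p a} ^ m * √(q p)) :
    (#P : ℝ) ^ m * #E ≤ 64 * m ^ m * (y ^ m + 1) := by
  have hPy : #P ≤ y := by
    simpa using card_le_card fun a ha => mem_Ioc.2 ⟨(hP a ha).1.pos, (hP a ha).2⟩
  have hQy : Q ≤ y ^ m := calc
    Q ≤ Q ^ 3 := Nat.le_self_pow (by norm_num) Q
    _ ≤ 32 * m ^ m * Q ^ 3 := Nat.le_mul_of_pos_left _ (Nat.mul_pos (by norm_num) Nat.pow_self_pos)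
    _ ≤ #P ^ m := hQ
    _ ≤ y ^ m := Nat.pow_le_pow_left hPy m
  have hmain := card_pow_mul_card_sq_le hP hE hq (hQy.trans (Nat.le_succ _)) h
  rcases (show (0 : ℝ) ≤ #E by positivity).eq_or_lt with h0 | hpos
  · rw [← h0, mul_zero]
    positivity
  have hQ' : (#E : ℝ) ^ 2 * (32 * m ^ m * Q ^ 3) ≤ #E ^ 2 * #P ^ m := by
    gcongr
    exact_mod_cast hQ
  refine le_of_mul_le_mul_right ?_ hpos
  linear_combination 2 * hmain + hQ'

end Sieve

section Generation

open Finset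

lemma closure_eq_top_of_forall_prime_exists_pow_ne_one {G : Type*} [Group G] [Finite G] {s : Set G}
    (h : ∀ q : ℕ, q.Prime → q ∣ Nat.card G → ∃ g ∈ s, g ^ (Nat.card G / q) ≠ 1) :
    Subgroup.closure s = ⊤ := by
  by_contra hne
  obtain ⟨q, hq, c, hc⟩ := Nat.exists_prime_and_dvd (mt Subgroup.index_eq_one.1 hne)
  have hcard : Nat.card G = q * (Nat.card (Subgroup.closure s) * c) := by
    rw [← (Subgroup.closure s).card_mul_index, hc]
    ring
  obtain ⟨g, hg, hpow⟩ := h q hq ⟨_, hcard⟩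
  have hone : g ^ Nat.card (Subgroup.closure s) = 1 :=
    orderOf_dvd_iff_pow_eq_one.1 (Subgroup.orderOf_dvd_natCard _ (Subgroup.subset_closure hg))
  exact hpow (by rw [hcard, Nat.mul_div_cancel_left _ hq.pos, pow_mul, hone, one_pow])

/- Union bound: a random `M`-tuple from `P` lies in `R i ^ M` with probability `(#R i / #P) ^ M`. -/
lemma exists_subset_card_le_forall_not_subset {α ι : Type*} {P : Finset α} {I : Finset ι}
    {R : ι → Finset α} {M : ℕ} (h : ∑ i ∈ I, #(R i) ^ M < #P ^ M) :
    ∃ S ⊆ P, #S ≤ M ∧ ∀ i ∈ I, ¬ S ⊆ R i := by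
  have hlt : #(I.biUnion fun i => Fintype.piFinset fun _ : Fin M => R i) <
      #(Fintype.piFinset fun _ : Fin M => P) := by
    refine card_biUnion_le.trans_lt ?_
    simpa only [Fintype.card_piFinset_const] using h
  obtain ⟨t, htP, ht⟩ := exists_mem_notMem_of_card_lt_card hlt
  refine ⟨univ.image t, ?_, card_image_le.trans (by simp), fun i hi hsub => ht ?_⟩
  · exact image_subset_iff.2 fun j _ => Fintype.mem_piFinset.1 htP j
  · exact mem_biUnion.2 ⟨i, hi, Fintype.mem_piFinset.2 fun j =>
      hsub (mem_image_of_mem t (mem_univ j))⟩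

lemma sum_primeFactors_inv_sq_lt_one (n : ℕ) : ∑ q ∈ n.primeFactors, ((q : ℝ) ^ 2)⁻¹ < 1 := by
  rcases Nat.eq_zero_or_pos n with rfl | hn
  · simp
  have hsub : n.primeFactors ⊆ Ioc 1 n := fun q hq =>
    mem_Ioc.2 ⟨(Nat.prime_of_mem_primeFactors hq).one_lt, Nat.le_of_mem_primeFactors hq⟩
  calc ∑ q ∈ n.primeFactors, ((q : ℝ) ^ 2)⁻¹
      ≤ ∑ q ∈ Ioc 1 n, ((q : ℝ) ^ 2)⁻¹ :=
        sum_le_sum_of_subset_of_nonneg hsub fun _ _ _ => by positivity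
    _ ≤ ((1 : ℕ) : ℝ)⁻¹ - (n : ℝ)⁻¹ := sum_Ioc_inv_sq_le_sub one_ne_zero hn
    _ < 1 := by simpa using hn

/-- The group `(ℤ/pℤ)ˣ` is generated by the residues of at most `k` primes not exceeding `y`. The
bound `y` is real so that it can be a power `p ^ δ`. -/
def GeneratedByPrimes (k p : ℕ) (y : ℝ) : Prop :=
  ∃ S : Finset ℕ, (∀ n ∈ S, n.Prime ∧ (n : ℝ) ≤ y) ∧ #S ≤ k ∧
    Subgroup.closure {u : (ZMod p)ˣ | ∃ n ∈ S, (u : ZMod p) = (n : ZMod p)} = ⊤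

lemma GeneratedByPrimes.mono {k p : ℕ} {y z : ℝ} (h : GeneratedByPrimes k p y) (hyz : y ≤ z) :
    GeneratedByPrimes k p z := by
  obtain ⟨S, hS, hcard, htop⟩ := h
  exact ⟨S, fun n hn => ⟨(hS n hn).1, (hS n hn).2.trans hyz⟩, hcard, htop⟩

variable {p : ℕ}

lemma closure_eq_top_of_forall_prime_exists_not_isPowerResidue (hp : p.Prime) {S : Finset ℕ}
    (hS : ∀ a ∈ S, ¬ p ∣ a)
    (h : ∀ q : ℕ, q.Prime → q ∣ p - 1 → ∃ a ∈ S, ¬ IsPowerResidue q p a) :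
    Subgroup.closure {u : (ZMod p)ˣ | ∃ n ∈ S, (u : ZMod p) = (n : ZMod p)} = ⊤ := by
  have : Fact p.Prime := ⟨hp⟩
  have hcard : Nat.card (ZMod p)ˣ = p - 1 := by rw [Nat.card_eq_fintype_card, ZMod.card_units]
  refine closure_eq_top_of_forall_prime_exists_pow_ne_one fun q hq hqp => ?_
  rw [hcard] at hqp ⊢
  obtain ⟨a, ha, hres⟩ := h q hq hqp
  have hunit : (a : ZMod p) ≠ 0 := mt (ZMod.natCast_eq_zero_iff a p).1 (hS a ha)
  exact ⟨Units.mk0 _ hunit, ⟨a, ha, rfl⟩, fun hpow => hres (congrArg Units.val hpow)⟩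

lemma exists_prime_of_not_generatedByPrimes (hp : p.Prime) {P : Finset ℕ} {y M : ℕ}
    (hP : P.Nonempty) (hPy : ∀ a ∈ P, a.Prime ∧ a ≤ y) (hyp : y < p)
    (h : ¬ GeneratedByPrimes M p y) :
    ∃ q : ℕ, q.Prime ∧ q ∣ p - 1 ∧
      (#P : ℝ) ^ M < #{a ∈ P | IsPowerResidue q p a} ^ M * q ^ 2 := by
  by_contra! hfew
  refine h ?_
  have hsum : ∑ q ∈ (p - 1).primeFactors, (#{a ∈ P | IsPowerResidue q p a} : ℝ) ^ M < #P ^ M :=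
    calc _ ≤ ∑ q ∈ (p - 1).primeFactors, (#P : ℝ) ^ M * ((q : ℝ) ^ 2)⁻¹ := by
          refine sum_le_sum fun q hq => ?_
          have hq' := Nat.prime_of_mem_primeFactors hq
          have hpos : (0 : ℝ) < q ^ 2 := pow_pos (mod_cast hq'.pos) 2
          exact (le_mul_inv_iff₀ hpos).2 (hfew q hq' (Nat.dvd_of_mem_primeFactors hq))
      _ = (#P : ℝ) ^ M * ∑ q ∈ (p - 1).primeFactors, ((q : ℝ) ^ 2)⁻¹ := (mul_sum _ _ _).symm
      _ < #P ^ M := mul_lt_of_lt_one_right (pow_pos (mod_cast hP.card_pos) M)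
          (sum_primeFactors_inv_sq_lt_one _)
  obtain ⟨S, hSP, hScard, hS⟩ := exists_subset_card_le_forall_not_subset (mod_cast hsum)
  refine ⟨S, fun n hn => ⟨(hPy n (hSP hn)).1, mod_cast (hPy n (hSP hn)).2⟩, hScard,
    closure_eq_top_of_forall_prime_exists_not_isPowerResidue hp (fun a ha => ?_) fun q hq hqp => ?_⟩
  · exact Nat.not_dvd_of_pos_of_lt (hPy a (hSP ha)).1.pos ((hPy a (hSP ha)).2.trans_lt hyp)
  · obtain ⟨a, ha, haR⟩ := not_subset.1
      (hS q (Nat.mem_primeFactors.2 ⟨hq, hqp, (Nat.sub_pos_of_lt hp.one_lt).ne'⟩))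
    exact ⟨a, ha, fun hres => haR (mem_filter.2 ⟨hSP ha, hres⟩)⟩

end Generation

section PrimeCounting

lemma id_isBigO_primeCounting_mul_log :
    (fun x : ℝ => x) =O[atTop] fun x => (Nat.primeCounting ⌊x⌋₊ : ℝ) * Real.log x := by
  refine Asymptotics.IsBigO.of_bound 4 ?_
  filter_upwards [eventually_ge_atTop 8, Real.isLittleO_log_id_atTop.bound
    (show (0 : ℝ) < 1 / 32 by norm_num)] with x hx hlog
  have hlogx : 0 < Real.log x := Real.log_pos (by linarith)
  have hlog' : Real.log x ≤ x / 32 := by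
    simp only [id, Real.norm_eq_abs, abs_of_pos hlogx, abs_of_nonneg (show 0 ≤ x by linarith)]
      at hlog
    linarith
  have hlog_add : Real.log (x + 2) ≤ 2 * Real.log x := by
    rw [two_mul, ← Real.log_mul (by linarith) (by linarith)]
    exact Real.log_le_log (by linarith) (by nlinarith)
  have hpi := (div_le_iff₀ hlogx).1 (Chebyshev.pi_ge' (show 1 < x by linarith))
  rw [Real.norm_of_nonneg (by linarith), Real.norm_of_nonneg (by positivity)]
  nlinarith [Real.log_two_gt_d9]

lemma rpow_isLittleO_primeCounting {θ : ℝ} (hθ : θ < 1) :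
    (fun x : ℝ => x ^ θ) =o[atTop] fun x => (Nat.primeCounting ⌊x⌋₊ : ℝ) := by
  have hlog : (fun x : ℝ => x ^ θ * Real.log x) =o[atTop] fun x => x := by
    refine ((Asymptotics.isBigO_refl (fun x : ℝ => x ^ θ) atTop).mul_isLittleO
      (isLittleO_log_rpow_atTop (sub_pos.2 hθ))).congr' .rfl ?_
    filter_upwards [eventually_gt_atTop 0] with x hx
    rw [← Real.rpow_add hx, add_sub_cancel, Real.rpow_one]
  have hne : ∀ᶠ x : ℝ in atTop, Real.log x ≠ 0 := by
    filter_upwards [eventually_gt_atTop 1] with x hx using (Real.log_pos hx).ne'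
  refine ((hlog.trans_isBigO id_isBigO_primeCounting_mul_log).mul_isBigO
    (Asymptotics.isBigO_refl (fun x => (Real.log x)⁻¹) atTop)).congr' ?_ ?_ <;>
  · filter_upwards [hne] with x hx
    rw [mul_assoc, mul_inv_cancel₀ hx, mul_one]

lemma eventually_pow_le_primeCounting_pow_succ (m : ℕ) :
    ∀ᶠ y : ℕ in atTop, y ^ m ≤ Nat.primeCounting y ^ (m + 1) := by
  have hθ : (m : ℝ) / (m + 1) < 1 := (div_lt_one (by positivity)).2 (lt_add_one _)
  filter_upwards [((rpow_isLittleO_primeCounting hθ).comp_tendsto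
    tendsto_natCast_atTop_atTop).bound one_pos] with y hy
  have hy' : (y : ℝ) ^ ((m : ℝ) / (m + 1)) ≤ Nat.primeCounting y := by
    simpa [abs_of_nonneg (Real.rpow_nonneg y.cast_nonneg _)] using hy
  have hpow : ((y : ℝ) ^ ((m : ℝ) / (m + 1))) ^ (m + 1) = y ^ m := by
    rw [← Real.rpow_mul_natCast y.cast_nonneg, Nat.cast_add_one,
      div_mul_cancel₀ _ (by positivity), Real.rpow_natCast]
  have hle := pow_le_pow_left₀ (by positivity) hy' (m + 1)
  rw [hpow] at hle
  exact_mod_cast hle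

end PrimeCounting

section ExceptionalPrimes

open Finset

lemma exists_prime_of_not_generatedByPrimes_four_mul {p y m : ℕ} {P : Finset ℕ} (hp : p.Prime)
    (hP : P.Nonempty) (hPy : ∀ a ∈ P, a.Prime ∧ a ≤ y) (hyp : y < p)
    (h : ¬ GeneratedByPrimes (4 * m) p y) :
    ∃ q : ℕ, (q.Prime ∧ q ∣ p - 1) ∧
      (#P : ℝ) ^ m ≤ #{a ∈ P | IsPowerResidue q p a} ^ m * √q := by
  obtain ⟨q, hq, hqp, hlt⟩ := exists_prime_of_not_generatedByPrimes hp hP hPy hyp h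
  refine ⟨q, ⟨hq, hqp⟩, le_of_lt (lt_of_pow_lt_pow_left₀ 4 (by positivity) ?_)⟩
  rwa [mul_pow, ← pow_mul, ← pow_mul, mul_comm m, show √(q : ℝ) ^ 4 = (√q ^ 2) ^ 2 by ring,
    Real.sq_sqrt q.cast_nonneg]

lemma eventually_card_not_generatedByPrimes_le {L m : ℕ} (hm : 3 * L + 1 ≤ m) :
    ∀ᶠ y : ℕ in atTop,
      (#{p ∈ Ioc y ((2 * y) ^ L) | p.Prime ∧ ¬ GeneratedByPrimes (4 * (m + 1)) p y} : ℝ) ≤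
        128 * (m + 1) ^ (m + 1) * y := by
  filter_upwards [eventually_pow_le_primeCounting_pow_succ m,
    eventually_ge_atTop (32 * (m + 1) ^ (m + 1) * 2 ^ (3 * L)), eventually_gt_atTop 0]
    with y hpi hy hy0
  set E := {p ∈ Ioc y ((2 * y) ^ L) | p.Prime ∧ ¬ GeneratedByPrimes (4 * (m + 1)) p y}
  have hPy : ∀ a ∈ Nat.primesLE y, a.Prime ∧ a ≤ y := fun a ha => (Nat.mem_primesLE.1 ha).symm
  rw [← Nat.primesLE_card_eq_primeCounting] at hpi
  have hP : (Nat.primesLE y).Nonempty :=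
    card_pos.1 (Nat.pos_of_ne_zero
      (ne_zero_pow m.succ_ne_zero ((pow_pos hy0 m).trans_le hpi).ne'))
  have hE : ∀ p ∈ E, p.Prime ∧ p ≤ (2 * y) ^ L := fun p hp =>
    ⟨(mem_filter.1 hp).2.1, (mem_Ioc.1 (mem_filter.1 hp).1).2⟩
  have hwitness (p : ℕ) : ∃ q : ℕ, p ∈ E → (q.Prime ∧ q ∣ p - 1) ∧
      (#(Nat.primesLE y) : ℝ) ^ (m + 1) ≤
        #{a ∈ Nat.primesLE y | IsPowerResidue q p a} ^ (m + 1) * √q := by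
    by_cases hp : p ∈ E
    · obtain ⟨hpy, hp, hgen⟩ := mem_filter.1 hp
      exact (exists_prime_of_not_generatedByPrimes_four_mul hp hP hPy (mem_Ioc.1 hpy).1 hgen).imp
        fun q hq _ => hq
    · exact ⟨0, fun h => absurd h hp⟩
  choose q hq using hwitness
  have hQ : 32 * (m + 1) ^ (m + 1) * ((2 * y) ^ L) ^ 3 ≤ #(Nat.primesLE y) ^ (m + 1) := calc
    _ = 32 * (m + 1) ^ (m + 1) * 2 ^ (3 * L) * y ^ (3 * L) := by ring
    _ ≤ y * y ^ (3 * L) := by gcongr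
    _ = y ^ (3 * L + 1) := (pow_succ' _ _).symm
    _ ≤ y ^ m := Nat.pow_le_pow_right hy0 hm
    _ ≤ _ := hpi
  have hcount := card_pow_mul_card_le hPy hE (fun p hp => (hq p hp).1) hQ fun p hp => (hq p hp).2
  have hone : (1 : ℝ) ≤ y ^ (m + 1) := one_le_pow₀ (mod_cast hy0)
  refine le_of_mul_le_mul_left ?_ (show (0 : ℝ) < y ^ m by positivity)
  calc (y : ℝ) ^ m * #E ≤ #(Nat.primesLE y) ^ (m + 1) * #E := by gcongr; exact_mod_cast hpi
    _ ≤ 64 * (m + 1) ^ (m + 1) * (y ^ (m + 1) + 1) := by exact_mod_cast hcount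
    _ ≤ 64 * (m + 1) ^ (m + 1) * (y ^ (m + 1) + y ^ (m + 1)) := by gcongr
    _ = y ^ m * (128 * (m + 1) ^ (m + 1) * y) := by ring

/-- The number of primes `p ≤ x` that do not satisfy `G`, for measuring how often a property of
primes fails. -/
noncomputable def exceptionalCount (G : ℕ → Prop) (x : ℝ) : ℕ :=
  #{p ∈ range (⌊x⌋₊ + 1) | p.Prime ∧ ¬ G p}

lemma exists_exceptionalCount_le_add {G H : ℕ → Prop} (h : ∀ᶠ p in atTop, G p → H p) :
    ∃ N : ℕ, ∀ x, exceptionalCount H x ≤ exceptionalCount G x + N := by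
  obtain ⟨N, hN⟩ := eventually_atTop.1 h
  refine ⟨N, fun x => ?_⟩
  rw [← card_range N]
  refine (card_le_card fun p hp => ?_).trans (card_union_le _ _)
  obtain ⟨hpx, hp, hH⟩ := mem_filter.1 hp
  rw [mem_union, mem_range]
  exact (lt_or_ge p N).symm.imp_left fun hNp => mem_filter.2 ⟨hpx, hp, mt (hN p hNp) hH⟩

lemma exceptionalCount_isLittleO_primeCounting {G H : ℕ → Prop} {θ : ℝ} (hθ : θ < 1)
    (hG : (fun x => (exceptionalCount G x : ℝ)) =O[atTop] fun x => x ^ θ)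
    (h : ∀ᶠ p in atTop, G p → H p) :
    (fun x => (exceptionalCount H x : ℝ)) =o[atTop] fun x => (Nat.primeCounting ⌊x⌋₊ : ℝ) := by
  obtain ⟨N, hN⟩ := exists_exceptionalCount_le_add h
  have hconst : (fun _ : ℝ => (N : ℝ)) =o[atTop] fun x => (Nat.primeCounting ⌊x⌋₊ : ℝ) := by
    refine (Asymptotics.isBigO_const_const (N : ℝ) (one_ne_zero (α := ℝ)) atTop).trans_isLittleO ?_
    simpa only [Real.rpow_zero] using rpow_isLittleO_primeCounting zero_lt_one
  refine (Asymptotics.IsBigO.of_norm_le fun x => ?_).trans_isLittleO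
    ((hG.trans_isLittleO (rpow_isLittleO_primeCounting hθ)).add hconst)
  rw [Real.norm_natCast]
  exact_mod_cast hN x

lemma exceptionalCount_generatedByPrimes_le {k j y N : ℕ} {δ x : ℝ} (hj : 1 ≤ j * δ) (hx : x ≤ N) :
    exceptionalCount (fun p => GeneratedByPrimes k p (p ^ δ)) x ≤
      y ^ j + #{p ∈ Ioc y N | p.Prime ∧ ¬ GeneratedByPrimes k p y} := by
  have hδ : 0 ≤ δ := (pos_of_mul_pos_right (one_pos.trans_le hj) j.cast_nonneg).le
  have hj0 : j ≠ 0 := by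
    rintro rfl
    norm_num at hj
  rw [← tsub_zero (y ^ j), ← Nat.card_Ioc 0 (y ^ j)]
  refine (card_le_card fun p hp => ?_).trans (card_union_le _ _)
  obtain ⟨hpx, hp, hgen⟩ := mem_filter.1 hp
  rw [mem_union, mem_Ioc, mem_filter, mem_Ioc]
  refine (le_or_gt p (y ^ j)).imp (fun hle => ⟨hp.pos, hle⟩) fun hlt => ?_
  have hyp : (y : ℝ) ≤ p ^ δ := by
    rcases Nat.eq_zero_or_pos y with rfl | hy
    · rw [Nat.cast_zero]
      positivity
    calc (y : ℝ) ≤ y ^ (j * δ) := Real.self_le_rpow_of_one_le (mod_cast hy) hj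
      _ = ((y : ℝ) ^ j) ^ δ := Real.rpow_natCast_mul y.cast_nonneg j δ
      _ ≤ p ^ δ := by
        gcongr
        exact_mod_cast hlt.le
  exact ⟨⟨(Nat.le_self_pow hj0 y).trans_lt hlt, (Nat.lt_succ_iff.1 (mem_range.1 hpx)).trans
    (Nat.floor_le_of_le hx)⟩, hp, mt (fun h => h.mono hyp) hgen⟩

lemma eventually_le_two_mul_floor_rpow_pow {θ : ℝ} {L : ℕ} (hθ : 0 < θ) (hL : 1 ≤ θ * L) :
    ∀ᶠ x : ℝ in atTop, x ≤ ((2 * ⌊x ^ θ⌋₊) ^ L : ℕ) := by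
  filter_upwards [eventually_ge_atTop 1] with x hx
  have hone : 1 ≤ x ^ θ := Real.one_le_rpow hx hθ.le
  calc x ≤ x ^ (θ * L) := Real.self_le_rpow_of_one_le hx hL
    _ = (x ^ θ) ^ L := Real.rpow_mul_natCast (by linarith) θ L
    _ ≤ (2 * ⌊x ^ θ⌋₊) ^ L := by
      gcongr
      have hfloor : (1 : ℝ) ≤ ⌊x ^ θ⌋₊ := by exact_mod_cast Nat.one_le_floor_iff _ |>.2 hone
      linarith [Nat.lt_floor_add_one (x ^ θ)]
    _ = ((2 * ⌊x ^ θ⌋₊) ^ L : ℕ) := by push_cast; rfl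

end ExceptionalPrimes

lemma eventually_le_succ_mul_log_log_log_sq (k : ℕ) :
    ∀ᶠ p : ℕ in atTop, (k : ℝ) ≤ (k + 1) * Real.log (Real.log (Real.log p)) ^ 2 := by
  have hlog : Tendsto (fun p : ℕ => Real.log (Real.log (Real.log p))) atTop atTop :=
    Real.tendsto_log_atTop.comp (Real.tendsto_log_atTop.comp
      (Real.tendsto_log_atTop.comp tendsto_natCast_atTop_atTop))
  filter_upwards [hlog.eventually_ge_atTop 1] with p hp
  nlinarith [one_le_pow₀ hp (n := 2)]

theorem almost_all_primes_small_generating_set_general {δ η : ℝ} (hδ : 0 < δ) (hη : 0 < η) :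
    ∃ k : ℕ, (fun x => (exceptionalCount (fun p => GeneratedByPrimes k p (p ^ δ)) x : ℝ))
      =O[atTop] fun x : ℝ => x ^ η := by
  obtain ⟨i, hi⟩ := exists_nat_one_div_lt hδ
  set j := i + 1
  have hjpos : (0 : ℝ) < j := by positivity
  have hj : 1 ≤ j * δ := ((div_lt_iff₀' hjpos).1 (by simpa [j] using hi)).le
  have hθ : 0 < η / j := by positivity
  obtain ⟨L, hL⟩ := exists_nat_ge (η / j)⁻¹
  set m := 3 * L + 1
  set y : ℝ → ℕ := fun x => ⌊x ^ (η / j)⌋₊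
  have hy : Tendsto y atTop atTop := tendsto_nat_floor_atTop.comp (tendsto_rpow_atTop hθ)
  refine ⟨4 * (m + 1), Asymptotics.IsBigO.of_bound (1 + 128 * (m + 1) ^ (m + 1)) ?_⟩
  filter_upwards [hy.eventually (eventually_card_not_generatedByPrimes_le (L := L) le_rfl),
    eventually_le_two_mul_floor_rpow_pow hθ ((inv_le_iff_one_le_mul₀' hθ).1 hL),
    eventually_ge_atTop 0] with x hcard hx hx0
  have hyη : (y x : ℝ) ^ j ≤ x ^ η := calc
    (y x : ℝ) ^ j ≤ (x ^ (η / j)) ^ j := by gcongr; exact Nat.floor_le (by positivity)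
    _ = x ^ η := by rw [← Real.rpow_mul_natCast hx0, div_mul_cancel₀ _ hjpos.ne']
  have hyj : (y x : ℝ) ≤ y x ^ j := mod_cast Nat.le_self_pow (Nat.succ_ne_zero i) (y x)
  rw [Real.norm_natCast, Real.norm_of_nonneg (by positivity)]
  calc (exceptionalCount (fun p => GeneratedByPrimes (4 * (m + 1)) p (p ^ δ)) x : ℝ)
      ≤ y x ^ j + 128 * (m + 1) ^ (m + 1) * y x := by
        refine le_trans ?_ (add_le_add_right hcard _)
        exact_mod_cast exceptionalCount_generatedByPrimes_le hj hx
    _ ≤ x ^ η + 128 * (m + 1) ^ (m + 1) * x ^ η := by gcongr; exact hyj.trans hyη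
    _ = (1 + 128 * (m + 1) ^ (m + 1)) * x ^ η := by ring

/-- **Corollary 4.3.** Fix `ε > 0`. There is a constant `C > 0` such that for almost all primes
`p` there is a set `S ⊆ [1, p^{1/(4√e)+ε}]` with `#S ≤ C·(log log log p)²` whose residues
generate `(ZMod p)ˣ`: the number of primes `p ≤ x` for which no such set exists is `o(π(x))`. -/
theorem almost_all_primes_small_generating_set (ε : ℝ) (hε : 0 < ε) :
    ∃ C : ℝ, 0 < C ∧
      (fun x : ℝ =>
          (((Finset.range (⌊x⌋₊ + 1)).filter (fun p : ℕ => p.Prime ∧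
            ¬ ∃ S : Finset ℕ,
              (∀ n ∈ S, 1 ≤ n ∧
                (n : ℝ) ≤ (p : ℝ) ^ (1 / (4 * Real.sqrt (Real.exp 1)) + ε)) ∧
              (S.card : ℝ) ≤ C * Real.log (Real.log (Real.log p)) ^ 2 ∧
              Subgroup.closure {u : (ZMod p)ˣ | ∃ n ∈ S, (u : ZMod p) = (n : ZMod p)} = ⊤)).card
            : ℝ))
        =o[atTop] fun x : ℝ => (Nat.primeCounting ⌊x⌋₊ : ℝ) := by
  obtain ⟨k, hk⟩ := almost_all_primes_small_generating_set_general
    (δ := 1 / (4 * √(Real.exp 1)) + ε) (by positivity) one_half_pos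
  refine ⟨k + 1, by positivity, exceptionalCount_isLittleO_primeCounting one_half_lt_one hk ?_⟩
  filter_upwards [eventually_le_succ_mul_log_log_log_sq k] with p hp ⟨S, hS, hcard, htop⟩
  exact ⟨S, fun n hn => ⟨(hS n hn).1.one_le, (hS n hn).2⟩,
    (Nat.cast_le.2 hcard).trans hp, htop⟩
end

section
/- Let p be an odd prime and let q₁, ..., q_r be the distinct prime divisors of p − 1. Let x₁, ..., x_r be integers coprime to p such that for each i ∈ {1, ..., r}, the residue of x_i in (ZMod p)ˣ is not a q_i-th power. Then there exist integers l₁, ..., l_r such that the element x₁^{l₁} ⋯ x_r^{l_r} of (ZMod p)ˣ is a primitive root modulo p (i.e., generates the cyclic group (ZMod p)ˣ). In particular, the residues of x₁, ..., x_r generate (ZMod p)ˣ. -/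
/-!
A proper subgroup `H` of a cyclic group has index divisible by some prime `s`, and every element
of `H` is then an `s`-th power: its image in the cyclic quotient, of order divisible by `s`, is
trivial, so its exponent with respect to a generator is a multiple of `s`. Hence a family that
contains, for every prime `s` dividing the order of the group, an element which is not an `s`-th
power generates the group, and any generator is a product of powers of members of the family.
Infinite groups need no separate case: infinite orders and indices are recorded as `0`, which every
prime divides.
-/

section CyclicGroup

variable {G : Type*} [CommGroup G] [IsCyclic G]

theorem exists_pow_eq_of_mem_of_dvd_index {H : Subgroup G} {n : ℕ} (hn : n ∣ H.index) {u : G}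
    (hu : u ∈ H) : ∃ y : G, y ^ n = u := by
  obtain ⟨g, hg⟩ := exists_zpow_surjective G
  obtain ⟨m, rfl⟩ := hg u
  have orderOf_mk : orderOf (g : G ⧸ H) = H.index :=
    orderOf_eq_card_of_zpowers_eq_top <| (Subgroup.eq_top_iff' _).mpr <|
      QuotientGroup.mk_surjective.forall.mpr fun v => (hg v).imp fun k hk => by
        simp only [← hk, QuotientGroup.mk_zpow]
  have index_dvd : (H.index : ℤ) ∣ m := by
    rw [← orderOf_mk, orderOf_dvd_iff_zpow_eq_one, ← QuotientGroup.mk_zpow]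
    exact (QuotientGroup.eq_one_iff _).mpr hu
  obtain ⟨k, rfl⟩ := (Int.natCast_dvd_natCast.mpr hn).trans index_dvd
  exact ⟨g ^ k, by rw [← zpow_natCast, ← zpow_mul, mul_comm]⟩

theorem subgroup_eq_top_of_forall_prime_exists_not_pow {H : Subgroup G}
    (hH : ∀ s : ℕ, s.Prime → s ∣ Nat.card G → ∃ u ∈ H, ¬ ∃ y : G, y ^ s = u) : H = ⊤ := by
  by_contra hne
  obtain ⟨s, hs, hsH⟩ := Nat.exists_prime_and_dvd (mt Subgroup.index_eq_one.mp hne)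
  obtain ⟨u, hu, hunr⟩ := hH s hs (hsH.trans H.index_dvd_card)
  exact hunr (exists_pow_eq_of_mem_of_dvd_index hsH hu)

theorem exists_prod_zpow_generator_of_closure_range_eq_top {ι : Type*} [Fintype ι] {x : ι → G}
    (hx : Subgroup.closure (Set.range x) = ⊤) :
    ∃ l : ι → ℤ, ∀ v : G, v ∈ Subgroup.zpowers (∏ i, x i ^ l i) := by
  obtain ⟨g, hg⟩ := IsCyclic.exists_generator (α := G)
  obtain ⟨l, rfl⟩ := Subgroup.mem_closure_range_iff_of_fintype.mp (hx ▸ Subgroup.mem_top g)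
  exact ⟨l, hg⟩

end CyclicGroup

theorem nonresidues_generate_general {K ι : Type*} [CommGroupWithZero K] [IsCyclic Kˣ] [Fintype ι]
    (x : ι → K) (hx : ∀ i, x i ≠ 0)
    (hxnr : ∀ s : ℕ, s.Prime → s ∣ Nat.card Kˣ →
      ∃ i, ¬ ∃ y : Kˣ, ((y ^ s : Kˣ) : K) = x i) :
    (∃ l : ι → ℤ, ∃ g : Kˣ, (g : K) = ∏ i, x i ^ l i ∧ ∀ v : Kˣ, v ∈ Subgroup.zpowers g) ∧
    Subgroup.closure {u : Kˣ | ∃ i, (u : K) = x i} = ⊤ := by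
  lift x to ι → Kˣ using fun i => (hx i).isUnit
  simp only [Units.val_inj] at hxnr ⊢
  have range_eq : {u : Kˣ | ∃ i, u = x i} = Set.range x := by
    simp only [Set.range, eq_comm]
  rw [range_eq]
  have closure_eq_top : Subgroup.closure (Set.range x) = ⊤ :=
    subgroup_eq_top_of_forall_prime_exists_not_pow fun s hs hdvd =>
      let ⟨i, hi⟩ := hxnr s hs hdvd
      ⟨x i, Subgroup.subset_closure (Set.mem_range_self i), hi⟩
  obtain ⟨l, hl⟩ := exists_prod_zpow_generator_of_closure_range_eq_top closure_eq_top
  exact ⟨⟨l, ∏ i, x i ^ l i, by simp only [Units.coe_prod, Units.val_zpow_eq_zpow_val], hl⟩,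
    closure_eq_top⟩

/-- **Bezout step of Lemma 1.1.** Let `p` be an odd prime with distinct prime divisors
`q₁, …, q_r` of `p - 1`, and let `x₁, …, x_r` be integers coprime to `p` such that `x_i` is a
non-`q_i`-th power residue modulo `p` for each `i`. Then there are integers `l₁, …, l_r` such
that `x₁^{l₁} ⋯ x_r^{l_r}` is a primitive root modulo `p`; in particular the residues of
`x₁, …, x_r` generate `(ZMod p)ˣ`. -/
theorem nonresidues_generate (p : ℕ) [hp : Fact p.Prime] (hodd : Odd p)
    (r : ℕ) (q : Fin r → ℕ) (hqinj : Function.Injective q)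
    (hq : ∀ i, (q i).Prime ∧ q i ∣ p - 1)
    (hqall : ∀ s : ℕ, s.Prime → s ∣ p - 1 → ∃ i, q i = s)
    (x : Fin r → ℤ) (hxcop : ∀ i, IsCoprime (x i) (p : ℤ))
    (hxnr : ∀ i, ¬ ∃ y : (ZMod p)ˣ, ((y ^ (q i) : (ZMod p)ˣ) : ZMod p) = (x i : ZMod p)) :
    (∃ l : Fin r → ℤ, ∃ g : (ZMod p)ˣ,
      (g : ZMod p) = ∏ i, (x i : ZMod p) ^ (l i) ∧
      ∀ v : (ZMod p)ˣ, v ∈ Subgroup.zpowers g) ∧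
    Subgroup.closure {u : (ZMod p)ˣ | ∃ i, (u : ZMod p) = (x i : ZMod p)} = ⊤ := by
  refine nonresidues_generate_general _
    (fun i => ((ZMod.coe_int_isUnit_iff_isCoprime _ _).mpr (hxcop i).symm).ne_zero)
    fun s hs hdvd => ?_
  obtain ⟨i, rfl⟩ := hqall s hs (by rwa [Nat.card_units, Nat.card_zmod] at hdvd)
  exact ⟨i, hxnr i⟩
end
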